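/- arXiv:1212.6073 — 8 statements merged into one kernel-verified Lean document; each statement's English description precedes it below -/
import Mathlib

section
/- Let k ≥ 1 and let r_1, …, r_k be complex numbers. Then there exist an open neighborhood U of 0 in ℂ^k and a holomorphic function v : U → ℂ with v(0) = 0 such that 1 − e^{v(s)} + Σ_{a=1}^k s_a · e^{r_a · v(s)} = 0 for all s = (s_1, …, s_k) ∈ U. Moreover, v is analytic at 0 and, for every nonzero multi-index (n_1, …, n_k) ∈ ℤ_{≥0}^k, the coefficient of s_1^{n_1} ⋯ s_k^{n_k} in the Taylor expansion of v at 0 equals (r_1 n_1 + ⋯ + r_k n_k − 1)_{(n_1 + ⋯ + n_k − 1)} / (n_1! ⋯ n_k!). -/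
open scoped BigOperators

/-!
Restrict the solution `v` to a line, `w(t) = v(ts)`. The Taylor coefficients at `t = 0` of
`exp (x w(t))` are polynomials in `x`, and their derivatives at `x = 0` are the Taylor coefficients
of `w`. Multiplying `exp w = 1 + t ∑ₐ sₐ exp (rₐ w)` by `exp (x w)` turns the equation into a
difference equation in `x` which, together with the value at `x = 0`, determines these polynomials
recursively. The Gould polynomials `x (x + y - 1)_(N - 1)` with `y = ∑ₐ rₐ nₐ`, weighted by
`∏ₐ sₐ ^ nₐ / nₐ!` and summed over `∑ₐ nₐ = N`, satisfy the same recursion. Differentiating at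
`x = 0` gives the homogeneous part of degree `N` of `v`, and a crude bound on the coefficients
allows the homogeneous parts to be split into monomials.
-/

open Finset Polynomial
open scoped Nat Topology ContDiff

section MultiIndex

variable {ι : Type*} [Fintype ι]

lemma sum_add_single_one (n : ι →₀ ℕ) (a : ι) :
    ∑ b, (n + Finsupp.single a 1 : ι →₀ ℕ) b = ∑ b, n b + 1 := by
  classical simp [sum_add_distrib, Finsupp.single_apply]

lemma sum_mul_add_single_one {R : Type*} [Semiring R] (r : ι → R) (n : ι →₀ ℕ) (a : ι) :
    ∑ b, r b * ((n + Finsupp.single a 1 : ι →₀ ℕ) b : R) = ∑ b, r b * (n b : R) + r a := by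
  classical simp [mul_add, sum_add_distrib, Finsupp.single_apply]

lemma sum_finsuppAntidiag_succ [DecidableEq ι] {M : Type*} [AddCommMonoid M]
    {f : (ι →₀ ℕ) → M} {a : ι} (hf : ∀ n, n a = 0 → f n = 0) (N : ℕ) :
    ∑ n ∈ univ.finsuppAntidiag (N + 1), f n =
      ∑ n ∈ univ.finsuppAntidiag N, f (n + Finsupp.single a 1) := by
  symm
  refine sum_bij_ne_zero (fun n _ _ ↦ n + Finsupp.single a 1) (fun n hn _ ↦ ?_)
    (fun _ _ _ _ _ _ h ↦ add_right_cancel h) (fun n hn hfn ↦ ?_) (fun _ _ _ ↦ rfl)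
  · simp only [mem_finsuppAntidiag, subset_univ, and_true] at hn ⊢
    rw [sum_add_single_one, hn]
  · have hna : n a ≠ 0 := fun h ↦ hfn (hf n h)
    have hsub : n - Finsupp.single a 1 + Finsupp.single a 1 = n :=
      tsub_add_cancel_of_le (Finsupp.single_le_iff.2 (Nat.one_le_iff_ne_zero.2 hna))
    refine ⟨n - Finsupp.single a 1, ?_, by rwa [hsub], hsub⟩
    simp only [mem_finsuppAntidiag, subset_univ, and_true] at hn ⊢
    rw [← hsub, sum_add_single_one] at hn
    exact Nat.add_right_cancel hn

lemma hasSum_sum_finsuppAntidiag [DecidableEq ι] {M : Type*} [AddCommMonoid M]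
    [TopologicalSpace M] [ContinuousAdd M] [RegularSpace M] {f : (ι →₀ ℕ) → M} {x : M}
    (hf : HasSum f x) : HasSum (fun N ↦ ∑ n ∈ univ.finsuppAntidiag N, f n) x := by
  refine ((Equiv.sigmaFiberEquiv fun n : ι →₀ ℕ ↦ ∑ a, n a).hasSum_iff.2 hf).sigma fun N ↦ ?_
  have hfiber : {n : ι →₀ ℕ | ∑ a, n a = N} = (univ.finsuppAntidiag N : Finset (ι →₀ ℕ)) := by
    ext n
    simp
  change HasSum (fun n : {n : ι →₀ ℕ | ∑ a, n a = N} ↦ f n) _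
  rw [hfiber]
  exact (univ.finsuppAntidiag N).hasSum f

/-- The divided-power monomial `∏ₐ sₐ ^ nₐ / nₐ!`. -/
noncomputable def dividedMonomial {K : Type*} [Field K] (s : ι → K) (n : ι →₀ ℕ) : K :=
  ∏ a, s a ^ n a / (n a)!

lemma dividedMonomial_add_single_one {K : Type*} [Field K] [CharZero K] (s : ι → K)
    (n : ι →₀ ℕ) (a : ι) :
    ((n + Finsupp.single a 1 : ι →₀ ℕ) a : K) * dividedMonomial s (n + Finsupp.single a 1) =
      s a * dividedMonomial s n := by
  classical
  have hne : (n a + 1 : K) ≠ 0 := by exact_mod_cast (n a).succ_ne_zero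
  have hothers : ∏ b ∈ univ.erase a, s b ^ (n + Finsupp.single a 1 : ι →₀ ℕ) b /
        (((n + Finsupp.single a 1 : ι →₀ ℕ) b)! : K) =
      ∏ b ∈ univ.erase a, s b ^ n b / ((n b)! : K) :=
    prod_congr rfl fun b hb ↦ by simp [(ne_of_mem_erase hb).symm]
  rw [dividedMonomial, dividedMonomial, ← mul_prod_erase _ _ (mem_univ a),
    ← mul_prod_erase _ _ (mem_univ a), hothers]
  simp only [Finsupp.add_apply, Finsupp.single_eq_same, Nat.factorial_succ, pow_succ]
  push_cast
  field_simp

end MultiIndex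

section Summability

variable {ι : Type*} [Fintype ι]

lemma summable_prod_pi {κ : ι → Type*} {f : ∀ a, κ a → ℝ} (hf₀ : ∀ a j, 0 ≤ f a j)
    (hf : ∀ a, Summable (f a)) : Summable fun n : ∀ a, κ a ↦ ∏ a, f a (n a) := by
  classical
  refine summable_of_sum_le (fun n ↦ prod_nonneg fun a _ ↦ hf₀ a (n a))
    (c := ∏ a, ∑' j, f a j) fun u ↦ ?_
  calc ∑ n ∈ u, ∏ a, f a (n a)
      ≤ ∑ n ∈ Fintype.piFinset fun a ↦ u.image (· a), ∏ a, f a (n a) :=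
        sum_le_sum_of_subset_of_nonneg
          (fun n hn ↦ Fintype.mem_piFinset.2 fun a ↦ mem_image_of_mem _ hn)
          fun n _ _ ↦ prod_nonneg fun a _ ↦ hf₀ a (n a)
    _ = ∏ a, ∑ j ∈ u.image (· a), f a j := (prod_univ_sum _ _).symm
    _ ≤ ∏ a, ∑' j, f a j :=
        prod_le_prod (fun a _ ↦ sum_nonneg fun j _ ↦ hf₀ a j)
          fun a _ ↦ (hf a).sum_le_tsum _ fun j _ ↦ hf₀ a j

lemma eventually_summable_mul_prod_pow {𝕜 : Type*} [NormedField 𝕜] [CompleteSpace 𝕜]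
    {c : (ι →₀ ℕ) → 𝕜} {K : ℝ} (hK : 0 ≤ K) (hc : ∀ n, ‖c n‖ ≤ K ^ ∑ a, n a) :
    ∀ᶠ s in 𝓝 (0 : ι → 𝕜), Summable fun n ↦ c n * ∏ a, s a ^ n a := by
  have hsmall : ∀ᶠ s in 𝓝 (0 : ι → 𝕜), ∀ a, K * ‖s a‖ < 1 := by
    refine Filter.eventually_all.2 fun a ↦ ?_
    have hcont : Continuous fun s : ι → 𝕜 ↦ K * ‖s a‖ := by fun_prop
    exact hcont.continuousAt.eventually_lt_const (by simp)
  filter_upwards [hsmall] with s hs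
  have hgeom : Summable fun n : ι → ℕ ↦ ∏ a, (K * ‖s a‖) ^ n a :=
    summable_prod_pi (fun a j ↦ by positivity)
      fun a ↦ summable_geometric_of_lt_one (by positivity) (hs a)
  refine .of_norm_bounded (Finsupp.equivFunOnFinite.summable_iff.2 hgeom) fun n ↦ ?_
  calc ‖c n * ∏ a, s a ^ n a‖ ≤ K ^ (∑ a, n a) * ∏ a, ‖s a‖ ^ n a := by
        rw [norm_mul, norm_prod]
        simp only [norm_pow]
        gcongr
        exact hc n
    _ = ∏ a, (K * ‖s a‖) ^ n a := by
        simp only [mul_pow, prod_mul_distrib, prod_pow_eq_pow_sum]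

end Summability

section ImplicitCoeff

variable {ι : Type*} [Fintype ι]

/-- The Taylor coefficient `(∑ₐ rₐ nₐ - 1)_(∑ₐ nₐ - 1) / ∏ₐ nₐ!` of the solution `v` at the
monomial with exponent `n`. The value at `n = 0` is set to `v 0 = 0` separately, since the formula
with truncated subtraction would give `1`. -/
noncomputable def implicitCoeff [DecidableEq ι] (r : ι → ℂ) (n : ι →₀ ℕ) : ℂ :=
  if n = 0 then 0
  else (descPochhammer ℂ ((∑ a, n a) - 1)).eval ((∑ a, r a * (n a : ℂ)) - 1) / ∏ a, ((n a)! : ℂ)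

lemma norm_descPochhammer_eval_le {R : Type*} [NormedCommRing R] [NormOneClass R]
    (M : ℕ) (z : R) :
    ‖(descPochhammer R M).eval z‖ ≤ (‖z‖ + M) ^ M := by
  rw [descPochhammer_eval_eq_prod_range]
  calc ‖∏ j ∈ range M, (z - j)‖ ≤ ∏ j ∈ range M, ‖z - j‖ := norm_prod_le _ _
    _ ≤ ∏ _j ∈ range M, (‖z‖ + M) := by
        gcongr with j hj
        calc ‖z - j‖ ≤ ‖z‖ + ‖(j : R)‖ := norm_sub_le _ _
          _ ≤ ‖z‖ + j := by gcongr; simpa using Nat.norm_cast_le (α := R) j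
          _ ≤ ‖z‖ + M := by gcongr; exact (mem_range.1 hj).le
    _ = (‖z‖ + M) ^ M := by simp

lemma norm_sum_mul_natCast_le {R : Type*} [NormedRing R] [NormOneClass R] (r : ι → R)
    (n : ι → ℕ) : ‖∑ a, r a * (n a : R)‖ ≤ (∑ a, ‖r a‖) * (∑ a, n a : ℕ) := by
  rw [sum_mul]
  refine norm_sum_le_of_le _ fun a _ ↦ ?_
  calc ‖r a * (n a : R)‖ ≤ ‖r a‖ * ‖(n a : R)‖ := norm_mul_le _ _
    _ ≤ ‖r a‖ * n a := by gcongr; simpa using Nat.norm_cast_le (α := R) (n a)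
    _ ≤ ‖r a‖ * (∑ a, n a : ℕ) := by
        gcongr
        exact single_le_sum (fun b _ ↦ Nat.zero_le (n b)) (mem_univ a)

lemma sum_pow_sum_div_prod_factorial_le (n : ι → ℕ) :
    ((∑ a, n a : ℕ) : ℝ) ^ (∑ a, n a) / ∏ a, ((n a)! : ℝ) ≤
      Real.exp (Fintype.card ι) ^ ∑ a, n a := by
  calc ((∑ a, n a : ℕ) : ℝ) ^ (∑ a, n a) / ∏ a, ((n a)! : ℝ)
      = ∏ a, ((∑ b, n b : ℕ) : ℝ) ^ n a / (n a)! := by rw [prod_div_distrib, prod_pow_eq_pow_sum]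
    _ ≤ ∏ _a : ι, Real.exp (∑ b, n b : ℕ) := by
        gcongr with a
        exact Real.pow_div_factorial_le_exp _ (by positivity) _
    _ = Real.exp (Fintype.card ι) ^ ∑ a, n a := by
        rw [prod_const, card_univ, ← Real.exp_nat_mul, ← Real.exp_nat_mul, mul_comm]

lemma norm_implicitCoeff_le [DecidableEq ι] (r : ι → ℂ) (n : ι →₀ ℕ) :
    ‖implicitCoeff r n‖ ≤
      ((∑ a, ‖r a‖ + 1) * Real.exp (Fintype.card ι)) ^ ∑ a, n a := by
  set R := ∑ a, ‖r a‖
  set N := ∑ a, n a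
  have hR : 0 ≤ R := by positivity
  rw [implicitCoeff]
  split_ifs with hn
  · rw [norm_zero]
    positivity
  have hN_pos : 1 ≤ N := by
    obtain ⟨a, ha⟩ := Finsupp.ne_iff.1 hn
    exact (Nat.one_le_iff_ne_zero.2 ha).trans
      (single_le_sum (fun b _ ↦ Nat.zero_le (n b)) (mem_univ a))
  have hbase : ‖∑ a, r a * (n a : ℂ) - 1‖ + ((N - 1 : ℕ) : ℝ) ≤ (R + 1) * N := by
    have hsub := norm_sub_le (∑ a, r a * (n a : ℂ)) 1
    have hsum := norm_sum_mul_natCast_le r n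
    rw [norm_one] at hsub
    push_cast [hN_pos]
    linarith
  have hone : 1 ≤ (R + 1) * N :=
    one_le_mul_of_one_le_of_one_le (by linarith) (by exact_mod_cast hN_pos)
  have hnum : ‖(descPochhammer ℂ (N - 1)).eval (∑ a, r a * (n a : ℂ) - 1)‖ ≤ ((R + 1) * N) ^ N :=
    calc _ ≤ _ := norm_descPochhammer_eval_le _ _
      _ ≤ ((R + 1) * N) ^ (N - 1) := by gcongr
      _ ≤ ((R + 1) * N) ^ N := pow_le_pow_right₀ hone (N.sub_le 1)
  calc _ ≤ ((R + 1) * N) ^ N / ∏ a, ((n a)! : ℝ) := by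
        simp only [norm_div, norm_prod, Complex.norm_natCast]
        gcongr
    _ = (R + 1) ^ N * ((N : ℝ) ^ N / ∏ a, ((n a)! : ℝ)) := by rw [mul_pow, mul_div_assoc]
    _ ≤ (R + 1) ^ N * Real.exp (Fintype.card ι) ^ N := by
        gcongr
        exact sum_pow_sum_div_prod_factorial_le n
    _ = _ := (mul_pow _ _ _).symm

end ImplicitCoeff

section Gould

/-- The Gould polynomial `x (x + y - 1)_(N - 1)` in `x`, which is `x / (x + y) · (x + y)_N` wherever
`x + y ≠ 0`. For `N = 0` it is `1`, whatever `y` is. -/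
noncomputable def gouldPoly {R : Type*} [CommRing R] (y : R) : ℕ → R[X]
  | 0 => 1
  | M + 1 => X * (descPochhammer R M).comp (X + C (y - 1))

variable {ι : Type*} [Fintype ι]

lemma gouldPoly_eval_add_one_sub {R : Type*} [CommRing R] (r c : ι → R) {M : ℕ}
    (hc : ∑ a, c a = M + 1) (x : R) :
    (gouldPoly (∑ a, r a * c a) (M + 1)).eval (x + 1) -
        (gouldPoly (∑ a, r a * c a) (M + 1)).eval x =
      ∑ a, c a * (gouldPoly (∑ b, r b * c b - r a) M).eval (x + r a) := by
  set y := ∑ a, r a * c a with hy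
  cases M with
  | zero => simp [gouldPoly, hc]
  | succ M =>
    have hleft : x + 1 + (y - 1) = x + y := by ring
    have hmid : x + (y - 1) = x + y - 1 := by ring
    have hright (a : ι) : x + r a + (y - r a - 1) = x + y - 1 := by ring
    have htop : (descPochhammer R (M + 1)).eval (x + y) =
        (x + y) * (descPochhammer R M).eval (x + y - 1) := by
      simp [descPochhammer_succ_left]
    have hweights : ∑ a, c a * (x + r a) = x * (M + 2) + y := by
      simp only [mul_add, sum_add_distrib, ← sum_mul, hc, hy, mul_comm (c _) (r _)]
      push_cast
      ring
    simp only [gouldPoly, eval_mul, eval_X, eval_comp, eval_add, eval_C, hleft, hmid, hright, htop,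
      descPochhammer_succ_eval, ← mul_assoc, ← sum_mul, hweights]
    ring

lemma derivative_gouldPoly_succ_eval_zero {R : Type*} [CommRing R] (y : R) (M : ℕ) :
    (gouldPoly y (M + 1)).derivative.eval 0 = (descPochhammer R M).eval (y - 1) := by
  simp [gouldPoly]

variable [DecidableEq ι]

/-- The sum of `gouldPoly (∑ₐ rₐ nₐ) N`, weighted by divided-power monomials, over the multi-indices
`n` of degree `N`. This is the part of `exp (x v(s))` homogeneous of degree `N` in `s`, where `v` is
the solution of the implicit equation. -/
noncomputable def gouldSum {K : Type*} [Field K] (r s : ι → K) (N : ℕ) : K[X] :=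
  ∑ n ∈ univ.finsuppAntidiag N, C (dividedMonomial s n) * gouldPoly (∑ a, r a * (n a : K)) N

lemma gouldSum_zero {K : Type*} [Field K] (r s : ι → K) : gouldSum r s 0 = 1 := by
  simp [gouldSum, gouldPoly, dividedMonomial]

lemma gouldSum_succ_eval_zero {K : Type*} [Field K] (r s : ι → K) (N : ℕ) :
    (gouldSum r s (N + 1)).eval 0 = 0 := by
  simp [gouldSum, gouldPoly, eval_finsetSum]

lemma mul_gouldSum_eval {K : Type*} [Field K] [CharZero K] (r s : ι → K) (N : ℕ) (a : ι) (x : K) :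
    s a * (gouldSum r s N).eval x =
      ∑ n ∈ univ.finsuppAntidiag (N + 1), dividedMonomial s n *
        (n a * (gouldPoly (∑ b, r b * (n b : K) - r a) N).eval x) := by
  rw [sum_finsuppAntidiag_succ (a := a) (fun n hn ↦ by simp [hn]), gouldSum, eval_finsetSum,
    mul_sum]
  refine sum_congr rfl fun n _ ↦ ?_
  rw [sum_mul_add_single_one, add_sub_cancel_right, eval_mul, eval_C]
  linear_combination
    -(gouldPoly (∑ b, r b * (n b : K)) N).eval x * dividedMonomial_add_single_one s n a

lemma gouldSum_eval_add_one_sub {K : Type*} [Field K] [CharZero K] (r s : ι → K) (N : ℕ) (x : K) :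
    (gouldSum r s (N + 1)).eval (x + 1) - (gouldSum r s (N + 1)).eval x =
      ∑ a, s a * (gouldSum r s N).eval (x + r a) := by
  simp only [mul_gouldSum_eval]
  rw [sum_comm, gouldSum, eval_finsetSum, eval_finsetSum, ← sum_sub_distrib]
  refine sum_congr rfl fun n hn ↦ ?_
  have hdeg : ∑ a, (n a : K) = N + 1 := by
    exact_mod_cast (mem_finsuppAntidiag.1 hn).1
  rw [← mul_sum, ← gouldPoly_eval_add_one_sub r (fun a ↦ (n a : K)) hdeg]
  simp only [eval_mul, eval_C, mul_sub]

lemma derivative_gouldSum_eval_zero (r s : ι → ℂ) (N : ℕ) :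
    (gouldSum r s N).derivative.eval 0 =
      ∑ n ∈ univ.finsuppAntidiag N, implicitCoeff r n * ∏ a, s a ^ n a := by
  cases N with
  | zero => simp [gouldSum_zero, implicitCoeff]
  | succ N =>
    rw [gouldSum, derivative_sum, eval_finsetSum]
    refine sum_congr rfl fun n hn ↦ ?_
    have hdeg : ∑ a, n a = N + 1 := (mem_finsuppAntidiag.1 hn).1
    have hn_ne : n ≠ 0 := by
      rintro rfl
      simp at hdeg
    rw [derivative_C_mul, eval_mul, eval_C, derivative_gouldPoly_succ_eval_zero, implicitCoeff,
      if_neg hn_ne, hdeg, dividedMonomial, prod_div_distrib, Nat.add_sub_cancel]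
    ring

end Gould

lemma polynomial_eq_of_eval_add_one_sub_eq {R : Type*} [CommRing R] [IsDomain R] [CharZero R]
    {p q : R[X]} (h₀ : p.eval 0 = q.eval 0)
    (h : ∀ x, p.eval (x + 1) - p.eval x = q.eval (x + 1) - q.eval x) : p = q := by
  have hnat (n : ℕ) : p.eval (n : R) = q.eval (n : R) := by
    induction n with
    | zero => simpa using h₀
    | succ n ih =>
      push_cast
      linear_combination h n + ih
  refine eq_of_infinite_eval_eq p q ((Set.infinite_range_of_injective Nat.cast_injective).mono ?_)
  rintro _ ⟨n, rfl⟩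
  exact hnat n

section Bell

/-- The polynomial `∑ⱼ B_{N,j}(c₁, c₂, …) xʲ` in `x`, where the `B_{N,j}` are the partial Bell
polynomials. It is `N!` times the coefficient of `t ^ N` in `exp (x ∑_{i ≥ 1} cᵢ tⁱ / i!)`, and is
defined through the recursion which the Leibniz rule gives for the latter. -/
noncomputable def bellPoly {R : Type*} [CommRing R] (c : ℕ → R) : ℕ → R[X]
  | 0 => 1
  | N + 1 => X * ∑ i : Fin (N + 1), C (N.choose i * c (i + 1)) * bellPoly c (N - i)

variable {R : Type*} [CommRing R] (c : ℕ → R) (N : ℕ)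

lemma bellPoly_zero : bellPoly c 0 = 1 := by
  rw [bellPoly]

lemma bellPoly_succ : bellPoly c (N + 1) =
    X * ∑ i ∈ range (N + 1), C (N.choose i * c (i + 1)) * bellPoly c (N - i) := by
  rw [bellPoly, Fin.sum_univ_eq_sum_range fun i ↦ C (N.choose i * c (i + 1)) * bellPoly c (N - i)]

lemma bellPoly_succ_eval_zero : (bellPoly c (N + 1)).eval 0 = 0 := by
  simp [bellPoly_succ]

lemma derivative_bellPoly_succ_eval_zero : (bellPoly c (N + 1)).derivative.eval 0 = c (N + 1) := by
  have hvanish : ∀ i ∈ range N, N.choose i * c (i + 1) * (bellPoly c (N - i)).eval 0 = 0 := by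
    intro i hi
    obtain ⟨j, hj⟩ := Nat.exists_eq_succ_of_ne_zero (Nat.sub_ne_zero_of_lt (mem_range.1 hi))
    rw [hj, bellPoly_succ_eval_zero, mul_zero]
  simp [bellPoly_succ, eval_finsetSum, sum_range_succ, sum_eq_zero hvanish, bellPoly_zero]

end Bell

section Taylor

lemma iteratedDeriv_cexp_mul {w : ℂ → ℂ} {z : ℂ} (hw : AnalyticAt ℂ w z) (hwz : w z = 0) (x : ℂ)
    (N : ℕ) :
    iteratedDeriv N (fun t ↦ Complex.exp (x * w t)) z =
      (bellPoly (fun i ↦ iteratedDeriv i w z) N).eval x := by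
  induction N using Nat.strong_induction_on with
  | _ N ih =>
  cases N with
  | zero => simp [hwz, bellPoly_zero]
  | succ N =>
    have hexp : AnalyticAt ℂ (fun t ↦ Complex.exp (x * w t)) z := (analyticAt_const.mul hw).cexp
    have hderiv : deriv (fun t ↦ Complex.exp (x * w t)) =ᶠ[𝓝 z]
        fun t ↦ x * (deriv w t * Complex.exp (x * w t)) := by
      filter_upwards [hw.eventually_analyticAt] with t ht
      rw [(ht.differentiableAt.hasDerivAt.const_mul x).cexp.deriv]
      ring
    rw [iteratedDeriv_succ', hderiv.iteratedDeriv_eq, iteratedDeriv_const_mul_field,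
      iteratedDeriv_fun_mul hw.deriv.contDiffAt hexp.contDiffAt, bellPoly_succ]
    simp only [eval_mul, eval_X, eval_finsetSum, eval_C]
    congr 1
    refine sum_congr rfl fun i _ ↦ ?_
    rw [ih (N - i) (by lia), iteratedDeriv_succ']

lemma iteratedDeriv_succ_id_mul_zero {𝕜 : Type*} [NontriviallyNormedField 𝕜] {f : 𝕜 → 𝕜} {N : ℕ}
    (hf : ContDiffAt 𝕜 (N + 1) f 0) :
    iteratedDeriv (N + 1) (fun t ↦ t * f t) 0 = (N + 1) * iteratedDeriv N f 0 := by
  rw [iteratedDeriv_fun_mul contDiffAt_fun_id hf, sum_eq_single 1]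
  · simp [iteratedDeriv_fun_id_zero]
  · intro i _ hi
    simp [iteratedDeriv_fun_id_zero, hi]
  · simp

lemma eventually_hasSum_iteratedDeriv_smul {E F : Type*} [NormedAddCommGroup E] [NormedSpace ℂ E]
    [NormedAddCommGroup F] [NormedSpace ℂ F] [CompleteSpace F] {v : E → F}
    (hv : AnalyticAt ℂ v 0) :
    ∀ᶠ s in 𝓝 0, HasSum
      (fun N : ℕ ↦ (N ! : ℂ)⁻¹ • iteratedDeriv N (fun t : ℂ ↦ v (t • s)) 0) (v s) := by
  obtain ⟨ε, hε, hball⟩ := Metric.eventually_nhds_iff_ball.1 hv.eventually_analyticAt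
  filter_upwards [Metric.ball_mem_nhds 0 (half_pos hε)] with s hs
  have hmem : ∀ t ∈ Metric.ball (0 : ℂ) 2, t • s ∈ Metric.ball (0 : E) ε := by
    intro t ht
    rw [mem_ball_zero_iff] at hs ht ⊢
    rw [norm_smul]
    nlinarith [norm_nonneg s, norm_nonneg t]
  have hline : DifferentiableOn ℂ (fun t : ℂ ↦ v (t • s)) (Metric.ball 0 2) := fun t ht ↦
    ((hball _ (hmem t ht)).differentiableAt.comp t
      (by fun_prop : DifferentiableAt ℂ (fun t : ℂ ↦ t • s) t)).differentiableWithinAt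
  simpa using Complex.hasSum_taylorSeries_on_ball hline (z := 1) (by simp)

end Taylor

section Line

variable {ι : Type*} [Fintype ι] {r s : ι → ℂ} {w : ℂ → ℂ}

lemma bellPoly_eval_add_one_sub (hw : AnalyticAt ℂ w 0) (hw₀ : w 0 = 0)
    (heq : ∀ᶠ t in 𝓝 0, Complex.exp (w t) = 1 + t * ∑ a, s a * Complex.exp (r a * w t))
    (N : ℕ) (x : ℂ) :
    (bellPoly (fun i ↦ iteratedDeriv i w 0) (N + 1)).eval (x + 1) -
        (bellPoly (fun i ↦ iteratedDeriv i w 0) (N + 1)).eval x =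
      (N + 1) * ∑ a, s a * (bellPoly (fun i ↦ iteratedDeriv i w 0) N).eval (x + r a) := by
  simp only [← iteratedDeriv_cexp_mul hw hw₀]
  have hexp (y : ℂ) : AnalyticAt ℂ (fun t ↦ Complex.exp (y * w t)) 0 :=
    (analyticAt_const.mul hw).cexp
  have hterm (a : ι) : AnalyticAt ℂ (fun t ↦ s a * Complex.exp ((x + r a) * w t)) 0 :=
    analyticAt_const.mul (hexp _)
  have hsum : AnalyticAt ℂ (fun t ↦ ∑ a, s a * Complex.exp ((x + r a) * w t)) 0 :=
    analyticAt_fun_sum _ fun a _ ↦ hterm a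
  have hshift : (fun t ↦ Complex.exp ((x + 1) * w t)) =ᶠ[𝓝 0] fun t ↦
      Complex.exp (x * w t) + t * ∑ a, s a * Complex.exp ((x + r a) * w t) := by
    filter_upwards [heq] with t ht
    simp only [add_mul, one_mul, Complex.exp_add, ht, mul_left_comm (s _), ← mul_sum]
    ring
  rw [hshift.iteratedDeriv_eq, iteratedDeriv_fun_add (hexp x).contDiffAt
      (contDiffAt_fun_id.mul hsum.contDiffAt), add_sub_cancel_left,
    iteratedDeriv_succ_id_mul_zero hsum.contDiffAt,
    iteratedDeriv_fun_sum fun a _ ↦ (hterm a).contDiffAt]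
  simp only [iteratedDeriv_const_mul_field]

variable [DecidableEq ι]

lemma bellPoly_eq_factorial_mul_gouldSum (hw : AnalyticAt ℂ w 0) (hw₀ : w 0 = 0)
    (heq : ∀ᶠ t in 𝓝 0, Complex.exp (w t) = 1 + t * ∑ a, s a * Complex.exp (r a * w t)) (N : ℕ) :
    bellPoly (fun i ↦ iteratedDeriv i w 0) N = C (N ! : ℂ) * gouldSum r s N := by
  induction N with
  | zero => simp [bellPoly_zero, gouldSum_zero]
  | succ N ih =>
    refine polynomial_eq_of_eval_add_one_sub_eq ?_ fun x ↦ ?_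
    · rw [bellPoly_succ_eval_zero, eval_mul, gouldSum_succ_eval_zero, mul_zero]
    · rw [bellPoly_eval_add_one_sub hw hw₀ heq, ih]
      simp only [eval_mul, eval_C, ← mul_sub, gouldSum_eval_add_one_sub, mul_left_comm (s _),
        ← mul_sum, Nat.factorial_succ]
      push_cast
      ring

lemma iteratedDeriv_eq_factorial_mul_sum (hw : AnalyticAt ℂ w 0) (hw₀ : w 0 = 0)
    (heq : ∀ᶠ t in 𝓝 0, Complex.exp (w t) = 1 + t * ∑ a, s a * Complex.exp (r a * w t)) (N : ℕ) :
    iteratedDeriv N w 0 =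
      N ! * ∑ n ∈ univ.finsuppAntidiag N, implicitCoeff r n * ∏ a, s a ^ n a := by
  cases N with
  | zero => simp [hw₀, implicitCoeff]
  | succ N =>
    rw [← derivative_gouldSum_eval_zero,
      ← derivative_bellPoly_succ_eval_zero (fun i ↦ iteratedDeriv i w 0) N,
      bellPoly_eq_factorial_mul_gouldSum hw hw₀ heq, derivative_C_mul, eval_mul, eval_C]

end Line

section Solution

lemma exists_analyticAt_implicit {𝕜 E : Type*} [RCLike 𝕜] [NormedAddCommGroup E] [NormedSpace 𝕜 E]
    [CompleteSpace E] {f : E × 𝕜 → 𝕜} {x : E} {z c : 𝕜} (hf : ContDiffAt 𝕜 ω f (x, z))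
    (hderiv : HasDerivAt (fun y ↦ f (x, y)) c z) (hc : c ≠ 0) :
    ∃ v : E → 𝕜, AnalyticAt 𝕜 v x ∧ v x = z ∧ ∀ᶠ s in 𝓝 x, f (s, v s) = f (x, z) := by
  have hpartial : HasFDerivAt (fun y ↦ f (x, y)) (fderiv 𝕜 f (x, z) ∘L .inr 𝕜 E 𝕜) z :=
    (hf.differentiableAt (by simp)).hasFDerivAt.comp z (hasFDerivAt_prodMk_right x z)
  have hinv : (fderiv 𝕜 f (x, z) ∘L .inr 𝕜 E 𝕜).IsInvertible := by
    rw [hpartial.unique hderiv.hasFDerivAt]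
    exact ⟨.unitsEquivAut 𝕜 (.mk0 c hc), by ext; simp⟩
  exact ⟨hf.implicitFunction (by simp) hinv,
    (hf.contDiffAt_implicitFunction (by simp) hinv).analyticAt,
    hf.implicitFunction_apply_self (by simp) hinv,
    hf.eventually_apply_implicitFunction (by simp) hinv⟩

variable {ι : Type*} [Fintype ι] (r : ι → ℂ)

lemma exists_analyticAt_one_sub_exp_add_sum_eq_zero :
    ∃ v : (ι → ℂ) → ℂ, AnalyticAt ℂ v 0 ∧ v 0 = 0 ∧ ∀ᶠ s in 𝓝 0,
      1 - Complex.exp (v s) + ∑ a, s a * Complex.exp (r a * v s) = 0 := by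
  let f : (ι → ℂ) × ℂ → ℂ := fun p ↦ 1 - Complex.exp p.2 + ∑ a, p.1 a * Complex.exp (r a * p.2)
  have hf : ContDiff ℂ ω f := by fun_prop
  have hderiv : HasDerivAt (fun z ↦ f (0, z)) (-1) 0 := by
    simpa [f] using (Complex.hasDerivAt_exp 0).const_sub 1
  simpa [f] using exists_analyticAt_implicit hf.contDiffAt hderiv (by simp)

variable {r} [DecidableEq ι] {v : (ι → ℂ) → ℂ}

lemma eventually_hasSum_implicitCoeff (hv : AnalyticAt ℂ v 0) (hv₀ : v 0 = 0)
    (heq : ∀ᶠ s in 𝓝 0, 1 - Complex.exp (v s) + ∑ a, s a * Complex.exp (r a * v s) = 0) :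
    ∀ᶠ s in 𝓝 0, HasSum (fun n ↦ implicitCoeff r n * ∏ a, s a ^ n a) (v s) := by
  filter_upwards [eventually_hasSum_iteratedDeriv_smul hv,
    eventually_summable_mul_prod_pow (by positivity) (norm_implicitCoeff_le r)] with s hline hsum
  have hto_zero : Filter.Tendsto (fun t : ℂ ↦ t • s) (𝓝 0) (𝓝 0) := by
    simpa using (by fun_prop : Continuous fun t : ℂ ↦ t • s).tendsto 0
  have hw : AnalyticAt ℂ (fun t : ℂ ↦ v (t • s)) 0 :=
    AnalyticAt.fun_comp (by simpa using hv) (by fun_prop)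
  have hw_eq : ∀ᶠ t : ℂ in 𝓝 0, Complex.exp (v (t • s)) =
      1 + t * ∑ a, s a * Complex.exp (r a * v (t • s)) := by
    filter_upwards [hto_zero.eventually heq] with t ht
    simp only [Pi.smul_apply, smul_eq_mul, mul_assoc, ← mul_sum] at ht
    linear_combination -ht
  have hcoeff (N : ℕ) : (N ! : ℂ)⁻¹ • iteratedDeriv N (fun t : ℂ ↦ v (t • s)) 0 =
      ∑ n ∈ univ.finsuppAntidiag N, implicitCoeff r n * ∏ a, s a ^ n a := by
    rw [iteratedDeriv_eq_factorial_mul_sum hw (by simpa using hv₀) hw_eq, smul_eq_mul,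
      inv_mul_cancel_left₀ (by exact_mod_cast N.factorial_ne_zero)]
  simp only [hcoeff] at hline
  rw [hline.unique (hasSum_sum_finsuppAntidiag hsum.hasSum)]
  exact hsum.hasSum

end Solution

/-- for `k ≥ 1` and `r₁, …, r_k ∈ ℂ` there are an open neighborhood `U` of
`0` in `ℂ^k` and a holomorphic function `v : U → ℂ` with `v(0) = 0` satisfying
`1 − e^{v(s)} + ∑ₐ sₐ e^{rₐ v(s)} = 0` on `U`; moreover `v` is analytic at `0` and its
Taylor expansion at `0` is the (absolutely convergent, near `0`) power series whose
coefficient at `s₁^{n₁} ⋯ s_k^{n_k}` (for a nonzero multi-index `n`) is the falling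
factorial `(r₁n₁ + ⋯ + r_k n_k − 1)_(n₁+⋯+n_k−1)` divided by `n₁! ⋯ n_k!`. -/
theorem statement3 (k : ℕ) (hk : 1 ≤ k) (r : Fin k → ℂ) :
    ∃ (U : Set (Fin k → ℂ)) (v : (Fin k → ℂ) → ℂ),
      IsOpen U ∧ (0 : Fin k → ℂ) ∈ U ∧ DifferentiableOn ℂ v U ∧ v 0 = 0 ∧
      (∀ s ∈ U, 1 - Complex.exp (v s) + ∑ a : Fin k, s a * Complex.exp (r a * v s) = 0) ∧
      AnalyticAt ℂ v 0 ∧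
      (∀ᶠ s in nhds (0 : Fin k → ℂ), HasSum
        (fun n : Fin k →₀ ℕ =>
          (if n = 0 then (0 : ℂ)
            else (descPochhammer ℂ ((∑ a : Fin k, n a) - 1)).eval
                  ((∑ a : Fin k, r a * (n a : ℂ)) - 1) / ∏ a : Fin k, ((n a).factorial : ℂ))
            * ∏ a : Fin k, s a ^ n a)
        (v s)) := by
  obtain ⟨v, hv, hv₀, heq⟩ := exists_analyticAt_one_sub_exp_add_sum_eq_zero r
  obtain ⟨U, hU, hU_open, h0U⟩ := eventually_nhds_iff.1 (heq.and hv.eventually_analyticAt)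
  exact ⟨U, v, hU_open, h0U, fun s hs ↦ (hU s hs).2.differentiableAt.differentiableWithinAt, hv₀,
    fun s hs ↦ (hU s hs).1, hv, eventually_hasSum_implicitCoeff hv hv₀ heq⟩
end

section
/- Let k ≥ 0 and let ε_0, …, ε_k be rational numbers. For y ∈ ℂ with Re(−y) > 0 and a ∈ {0, …, k}, define y^{ε_a} := exp(ε_a · (πi + Log(−y))), where Log is the principal branch of the complex logarithm, and define H(y, q̃_0, …, q̃_k) := 1 + y + Σ_{a=0}^k q̃_a · y^{ε_a}. Then there exist an open neighborhood V of 0 in ℂ^{k+1} and a holomorphic function y : V → ℂ such that y(0) = −1 and H(y(q̃), q̃) = 0 for all q̃ ∈ V. Moreover y(q̃) is the sum of a power series in q̃_0, …, q̃_k convergent on a neighborhood of 0 with constant term −1, and q̃ ↦ πi + Log(−y(q̃)) is the sum of a convergent power series with constant term πi. -/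
open scoped BigOperators

/-!
At `q̃ = 0` the equation `H(y, q̃) = 0` reads `1 + y = 0`, which has the simple root `y = -1`. Since
the branch of `log y` is analytic near `-1`, so is `H` near `(-1, 0)`, and the analytic implicit
function theorem continues the root to nearby `q̃`.
-/

open scoped Topology ContDiff

section ImplicitFunction

variable {𝕜 : Type*} [RCLike 𝕜]
  {E : Type*} [NormedAddCommGroup E] [NormedSpace 𝕜 E] [CompleteSpace E]
  {F : Type*} [NormedAddCommGroup F] [NormedSpace 𝕜 F] [CompleteSpace F]
  {G : Type*} [NormedAddCommGroup G] [NormedSpace 𝕜 G] [CompleteSpace G]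

theorem exists_analyticAt_implicitFunction {f : E × F → G} {x₀ : E} {y₀ : F} {e : F ≃L[𝕜] G}
    (hf : AnalyticAt 𝕜 f (x₀, y₀))
    (he : HasFDerivAt (fun y => f (x₀, y)) (e : F →L[𝕜] G) y₀) :
    ∃ ψ : E → F, ψ x₀ = y₀ ∧ AnalyticAt 𝕜 ψ x₀ ∧ ∀ᶠ x in 𝓝 x₀, f (x, ψ x) = f (x₀, y₀) := by
  have hpartial : HasFDerivAt (fun y => f (x₀, y))
      (fderiv 𝕜 f (x₀, y₀) ∘L .inr 𝕜 E F) y₀ :=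
    hf.differentiableAt.hasFDerivAt.comp y₀ (hasFDerivAt_prodMk_right x₀ y₀)
  have hinv : (fderiv 𝕜 f (x₀, y₀) ∘L .inr 𝕜 E F).IsInvertible := ⟨e, he.unique hpartial⟩
  have hsmooth : ContDiffAt 𝕜 ω f (x₀, y₀) := hf.contDiffAt
  have hω : (ω : WithTop ℕ∞) ≠ 0 := by simp
  exact ⟨hsmooth.implicitFunction hω hinv, hsmooth.implicitFunction_apply_self hω hinv,
    (hsmooth.contDiffAt_implicitFunction hω hinv).analyticAt,
    hsmooth.eventually_apply_implicitFunction hω hinv⟩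

theorem exists_analyticAt_add_sum_smul_eq_zero {ι : Type*} [Fintype ι]
    {h : F → G} {g : ι → F → G} {y₀ : F} {e : F ≃L[𝕜] G}
    (hh : AnalyticAt 𝕜 h y₀) (hg : ∀ a, AnalyticAt 𝕜 (g a) y₀)
    (hzero : h y₀ = 0) (he : HasFDerivAt h (e : F →L[𝕜] G) y₀) :
    ∃ y : (ι → 𝕜) → F, y 0 = y₀ ∧ AnalyticAt 𝕜 y 0 ∧
      ∀ᶠ q in 𝓝 0, h (y q) + ∑ a, q a • g a (y q) = 0 := by
  let f : (ι → 𝕜) × F → G := fun p => h p.2 + ∑ a, p.1 a • g a p.2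
  have hcoord (a : ι) : AnalyticAt 𝕜 (fun p : (ι → 𝕜) × F => p.1 a) (0, y₀) :=
    (ContinuousLinearMap.proj (R := 𝕜) (φ := fun _ : ι => 𝕜) a ∘L .fst 𝕜 _ F).analyticAt _
  have hf : AnalyticAt 𝕜 f (0, y₀) :=
    (hh.comp_of_eq analyticAt_snd rfl).add <| Finset.analyticAt_fun_sum _ fun a _ =>
      (hcoord a).smul ((hg a).comp_of_eq analyticAt_snd rfl)
  have hunperturbed : (fun y => f (0, y)) = h := by ext y; simp [f]
  obtain ⟨y, hy₀, hy, hyf⟩ := exists_analyticAt_implicitFunction hf (hunperturbed ▸ he)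
  exact ⟨y, hy₀, hy, hyf.mono fun q hq => hq.trans ((congrFun hunperturbed y₀).trans hzero)⟩

end ImplicitFunction

/-- The branch of the complex logarithm with `log (-1) = πi`, cut along the nonnegative real
axis. -/
noncomputable def posCutLog (y : ℂ) : ℂ := (Real.pi : ℂ) * Complex.I + Complex.log (-y)

theorem posCutLog_neg_one : posCutLog (-1) = (Real.pi : ℂ) * Complex.I := by
  simp [posCutLog]

theorem analyticAt_posCutLog {y : ℂ} (hy : -y ∈ Complex.slitPlane) : AnalyticAt ℂ posCutLog y :=
  analyticAt_const.add (analyticAt_id.neg.clog hy)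

theorem analyticAt_posCutLog_neg_one : AnalyticAt ℂ posCutLog (-1) :=
  analyticAt_posCutLog (by simp)

/-- The left-hand side `H(y, q) = 1 + y + ∑ₐ qₐ y^{εₐ}` of the mirror curve equation, where
`y^{εₐ}` is taken with respect to the branch `posCutLog`. -/
noncomputable def mirrorCurve {ι : Type*} [Fintype ι] (ε : ι → ℂ) (y : ℂ) (q : ι → ℂ) : ℂ :=
  1 + y + ∑ a, q a * Complex.exp (ε a * posCutLog y)

theorem exists_analyticAt_mirrorCurve_eq_zero {ι : Type*} [Fintype ι] (ε : ι → ℂ) :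
    ∃ y : (ι → ℂ) → ℂ, y 0 = -1 ∧ AnalyticAt ℂ y 0 ∧ ∀ᶠ q in 𝓝 0, mirrorCurve ε (y q) q = 0 := by
  have hpow (a : ι) : AnalyticAt ℂ (fun y => Complex.exp (ε a * posCutLog y)) (-1) :=
    (analyticAt_const.mul analyticAt_posCutLog_neg_one).cexp
  have hlin : AnalyticAt ℂ (fun y : ℂ => 1 + y) (-1) := analyticAt_const.add analyticAt_id
  have hderiv : HasFDerivAt (fun y : ℂ => 1 + y) ((.refl ℂ ℂ : ℂ ≃L[ℂ] ℂ) : ℂ →L[ℂ] ℂ) (-1) :=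
    (hasFDerivAt_id _).const_add 1
  simpa only [mirrorCurve, smul_eq_mul] using
    exists_analyticAt_add_sum_smul_eq_zero hlin hpow (add_neg_cancel 1) hderiv

theorem statement4_general {ι : Type*} [Fintype ι] (ε : ι → ℂ) :
    ∃ (V : Set (ι → ℂ)) (y : (ι → ℂ) → ℂ),
      IsOpen V ∧ 0 ∈ V ∧ DifferentiableOn ℂ y V ∧ y 0 = -1 ∧
      (∀ q ∈ V, mirrorCurve ε (y q) q = 0) ∧
      AnalyticAt ℂ y 0 ∧ AnalyticAt ℂ (fun q => posCutLog (y q)) 0 ∧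
      posCutLog (y 0) = (Real.pi : ℂ) * Complex.I := by
  obtain ⟨y, hy₀, hy, hzero⟩ := exists_analyticAt_mirrorCurve_eq_zero ε
  obtain ⟨V, hV, hVopen, h0V⟩ := eventually_nhds_iff.mp (hzero.and hy.eventually_analyticAt)
  exact ⟨V, y, hVopen, h0V, fun q hq => (hV q hq).2.differentiableAt.differentiableWithinAt, hy₀,
    fun q hq => (hV q hq).1, hy, analyticAt_posCutLog_neg_one.comp_of_eq hy hy₀,
    hy₀ ▸ posCutLog_neg_one⟩

/-- for rational numbers `ε₀, …, ε_k`, with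
`y^{εₐ} := exp(εₐ (πi + Log(−y)))` (principal branch of log, i.e. the branch of `log y`
with `log(−1) = πi`) and `H(y, q̃) := 1 + y + ∑ₐ q̃ₐ y^{εₐ}`, there exist an open
neighborhood `V` of `0` in `ℂ^{k+1}` and a holomorphic `y : V → ℂ` with `y(0) = −1` and
`H(y(q̃), q̃) = 0` on `V`; moreover `y` is the sum of a convergent power series at `0`
(with constant term `−1`, since `y(0) = −1`), and `q̃ ↦ πi + Log(−y(q̃))` is the sum of a
convergent power series with constant term `πi`. -/
theorem statement4 (k : ℕ) (ε : Fin (k + 1) → ℚ) :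
    ∃ (V : Set (Fin (k + 1) → ℂ)) (y : (Fin (k + 1) → ℂ) → ℂ),
      IsOpen V ∧ (0 : Fin (k + 1) → ℂ) ∈ V ∧ DifferentiableOn ℂ y V ∧ y 0 = -1 ∧
      (∀ q ∈ V, 1 + y q + ∑ a : Fin (k + 1),
          q a * Complex.exp ((ε a : ℂ) * ((Real.pi : ℂ) * Complex.I
            + Complex.log (-(y q)))) = 0) ∧
      AnalyticAt ℂ y 0 ∧
      AnalyticAt ℂ (fun q => (Real.pi : ℂ) * Complex.I + Complex.log (-(y q))) 0 ∧
      (Real.pi : ℂ) * Complex.I + Complex.log (-(y 0)) = (Real.pi : ℂ) * Complex.I :=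
  statement4_general fun a => (ε a : ℂ)
end

section
/- Let k ≥ 0 and let ε_0, …, ε_k be rational numbers. Let y(q̃) be the holomorphic function on a neighborhood of 0 in ℂ^{k+1} with y(0) = −1 satisfying 1 + y(q̃) + Σ_{a=0}^k q̃_a · exp(ε_a (πi + Log(−y(q̃)))) = 0. Then on a neighborhood of 0 one has the absolutely convergent expansion Log(−y(q̃)) = Σ_{(n_0,…,n_k) ≠ 0} [ (ε_0 n_0 + ⋯ + ε_k n_k − 1)_{(n_0 + ⋯ + n_k − 1)} / (n_0! ⋯ n_k!) ] · Π_{a=0}^k (e^{πi ε_a} q̃_a)^{n_a}, the sum running over nonzero multi-indices (n_0, …, n_k) ∈ ℤ_{≥0}^{k+1}. -/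
open scoped BigOperators

/-!
Put `w = Log (-y)` and `x a = exp (π i ε a) * q a`. The equation becomes
`Y = 1 + ∑ a, x a * Y ^ ε a` for `Y = exp w`, and Lagrange inversion predicts the coefficients of
all the powers `Y ^ α` at once. These predicted series `P α` satisfy
`P (α + 1) = P α + ∑ a, X a * P (α + ε a)`, and their coefficients are polynomials in `α`. A family
with both properties is determined by `P 0`, because in each degree the recursion leaves only a
polynomial of period `1`; hence `P (α + β) = P α * P β`. The series converge for small `x`, locally
uniformly in `α`, so `P α = exp (α * L)` where `L` is the limit of `(P α - 1) / α` at `α = 0`, which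
is the series of the theorem. The recursion at `α = 0` then says that `exp L` solves the equation
for `Y`, and the implicit function theorem gives `L = w`.
-/

open Filter Finsupp MvPowerSeries
open scoped Nat Topology

section MultiIndex

variable {ι : Type*}

theorem coeff_add_single_one_X_mul {R : Type*} [CommSemiring R] (f : MvPowerSeries ι R)
    (n : ι →₀ ℕ) (a : ι) : coeff (n + single a 1) (X a * f) = coeff n f := by
  rw [X, add_comm, coeff_add_monomial_mul, one_mul]

theorem coeff_X_mul_of_apply_eq_zero {R : Type*} [CommSemiring R] (f : MvPowerSeries ι R)
    {n : ι →₀ ℕ} {a : ι} (ha : n a = 0) : coeff n (X a * f) = 0 := by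
  simp [X, coeff_monomial_mul, ha]

theorem coeff_single_one_X_mul {R : Type*} [CommSemiring R] [DecidableEq ι]
    (f : MvPowerSeries ι R) (a b : ι) :
    coeff (single b 1) (X a * f) = if a = b then coeff 0 f else 0 := by
  split_ifs with hab
  · subst hab
    simpa using coeff_add_single_one_X_mul f 0 a
  · exact coeff_X_mul_of_apply_eq_zero f (by simp [hab])

variable [Fintype ι]

theorem prod_factorial_single_one (a : ι) : ∏ b, (single a 1 b)! = 1 := by
  classical
  exact Finset.prod_eq_one fun b _ => by rw [single_apply]; split_ifs <;> rfl

theorem prod_factorial_add_single_one (n : ι →₀ ℕ) (a : ι) :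
    ∏ b, ((n + single a 1 : ι →₀ ℕ) b)! = (n a + 1) * ∏ b, (n b)! := by
  classical
  rw [← Finset.mul_prod_erase _ _ (Finset.mem_univ a),
    ← Finset.mul_prod_erase _ (fun b => (n b)!) (Finset.mem_univ a), ← mul_assoc]
  congr 1
  · simp [Nat.factorial_succ]
  · exact Finset.prod_congr rfl fun b hb => by simp [(Finset.ne_of_mem_erase hb).symm]

theorem sum_mul_add_eq_degree_mul_add_weight {R : Type*} [CommSemiring R] (ε : ι → R) (α : R)
    (n : ι →₀ ℕ) : ∑ a, n a * (α + ε a) = n.degree * α + weight ε n := by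
  simp only [mul_add, Finset.sum_add_distrib, ← Finset.sum_mul, degree_eq_sum, weight_eq_sum,
    Nat.cast_sum, nsmul_eq_mul]

end MultiIndex

section ShiftRecursion

variable {R : Type*} [CommRing R]

theorem add_one_mul_eval_descPochhammer_succ (d : ℕ) (s α : R) :
    (α + 1) * (descPochhammer R (d + 1)).eval (s + α) =
      α * (descPochhammer R (d + 1)).eval (s + α - 1) +
        ((d + 2) * α + s) * (descPochhammer R d).eval (s + α - 1) := by
  have hleft : (descPochhammer R (d + 1)).eval (s + α) =
      (s + α) * (descPochhammer R d).eval (s + α - 1) := by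
    simp [descPochhammer_succ_left]
  rw [hleft, descPochhammer_succ_eval]
  ring

variable [IsDomain R] [CharZero R]

theorem polynomial_eq_zero_of_periodic {p : Polynomial R}
    (hp : Function.Periodic (fun α => p.eval α) 1) (hp0 : p.eval 0 = 0) : p = 0 := by
  refine p.eq_zero_of_infinite_isRoot <|
    (Set.infinite_range_of_injective (Nat.cast_injective (R := R))).mono ?_
  rintro _ ⟨m, rfl⟩
  simpa [hp0] using hp.nat_mul_eq m

theorem eq_zero_of_add_one_eq_add_sum {ι : Type*} [Fintype ι] (ε : ι → R)
    {D : R → MvPowerSeries ι R}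
    (hpoly : ∀ n, ∃ p : Polynomial R, ∀ α, coeff n (D α) = p.eval α)
    (hzero : D 0 = 0) (hadd_one : ∀ α, D (α + 1) = D α + ∑ a, X a * D (α + ε a)) (α : R) :
    D α = 0 := by
  suffices ∀ d, ∀ n : ι →₀ ℕ, n.degree = d → ∀ α, coeff n (D α) = 0 by
    ext n
    exact this _ n rfl α
  intro d
  induction d using Nat.strong_induction_on with
  | _ d ih =>
    intro n hn α
    have hlower (a : ι) (β : R) : coeff n (X a * D β) = 0 := by
      by_cases ha : n a = 0
      · exact coeff_X_mul_of_apply_eq_zero _ ha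
      obtain ⟨m, rfl⟩ : ∃ m, n = m + single a 1 := ⟨_, (sub_add_single_one_cancel ha).symm⟩
      rw [coeff_add_single_one_X_mul, ih m.degree (by simp [← hn]) m rfl]
    obtain ⟨p, hp⟩ := hpoly n
    have hperiodic : Function.Periodic (fun α => p.eval α) 1 := fun β => by
      simp only [← hp, hadd_one, map_add, map_sum, hlower, Finset.sum_const_zero, add_zero]
    have hp0 : p.eval 0 = 0 := by rw [← hp, hzero, map_zero]
    rw [hp, polynomial_eq_zero_of_periodic hperiodic hp0, Polynomial.eval_zero]

end ShiftRecursion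

section FormalSeries

variable {ι K : Type*} [Fintype ι] [Field K]

/-- The formal series `(Y ^ α - 1) / α`, read as `log Y` at `α = 0`, where `Y` is the formal
solution of `Y = 1 + ∑ a, X a * Y ^ ε a` with constant term `1`; as a function of `Y` it is the
Box–Cox transform of statistics. It is defined by the coefficients that Lagrange inversion
predicts. -/
noncomputable def boxCoxSeries (ε : ι → K) (α : K) : MvPowerSeries ι K := fun n =>
  if n = 0 then 0
  else (descPochhammer K (n.degree - 1)).eval (weight ε n + α - 1) / (∏ a, (n a)! : ℕ)

/-- The formal power `Y ^ α` of the solution `Y` of `Y = 1 + ∑ a, X a * Y ^ ε a` with constant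
term `1`. -/
noncomputable def powSeries (ε : ι → K) (α : K) : MvPowerSeries ι K :=
  1 + C α * boxCoxSeries ε α

theorem coeff_boxCoxSeries (ε : ι → K) (α : K) (n : ι →₀ ℕ) :
    coeff n (boxCoxSeries ε α) =
      if n = 0 then 0
      else (descPochhammer K (n.degree - 1)).eval (weight ε n + α - 1) / (∏ a, (n a)! : ℕ) :=
  rfl

theorem coeff_powSeries_of_ne_zero (ε : ι → K) (α : K) {n : ι →₀ ℕ} (hn : n ≠ 0) :
    coeff n (powSeries ε α) =
      α * (descPochhammer K (n.degree - 1)).eval (weight ε n + α - 1) / (∏ a, (n a)! : ℕ) := by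
  classical
  rw [powSeries, map_add, coeff_one, if_neg hn, zero_add, coeff_C_mul, coeff_boxCoxSeries,
    if_neg hn, mul_div_assoc]

@[simp]
theorem coeff_zero_powSeries (ε : ι → K) (α : K) :
    coeff (0 : ι →₀ ℕ) (powSeries ε α) = 1 := by
  simp only [powSeries, map_add, coeff_zero_one, coeff_C_mul, coeff_boxCoxSeries, if_true,
    mul_zero, add_zero]

@[simp]
theorem powSeries_zero (ε : ι → K) : powSeries ε 0 = 1 := by
  simp [powSeries]

theorem coeff_single_one_powSeries (ε : ι → K) (α : K) (a : ι) :
    coeff (single a 1) (powSeries ε α) = α := by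
  simp [coeff_powSeries_of_ne_zero, prod_factorial_single_one]

theorem exists_eval_eq_coeff_powSeries (ε : ι → K) (n : ι →₀ ℕ) :
    ∃ p : Polynomial K, ∀ α, coeff n (powSeries ε α) = p.eval α := by
  rcases eq_or_ne n 0 with rfl | hn
  · exact ⟨1, fun α => by simp⟩
  · refine ⟨Polynomial.X * (descPochhammer K (n.degree - 1)).comp
      (Polynomial.C (weight ε n) + Polynomial.X - 1) *
        Polynomial.C ((∏ a, (n a)! : ℕ) : K)⁻¹, fun α => ?_⟩
    simp only [coeff_powSeries_of_ne_zero ε α hn, div_eq_mul_inv, Polynomial.eval_mul,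
      Polynomial.eval_X, Polynomial.eval_comp, Polynomial.eval_sub, Polynomial.eval_add,
      Polynomial.eval_C, Polynomial.eval_one]

variable [CharZero K]

theorem coeff_X_mul_powSeries (ε : ι → K) (β : K) {n : ι →₀ ℕ} {d : ℕ}
    (hn : n.degree = d + 2) (a : ι) :
    coeff n (X a * powSeries ε β) =
      n a * β * (descPochhammer K d).eval (weight ε n - ε a + β - 1) / (∏ b, (n b)! : ℕ) := by
  by_cases ha : n a = 0
  · simp [coeff_X_mul_of_apply_eq_zero, ha]
  obtain ⟨m, rfl⟩ : ∃ m, n = m + single a 1 := ⟨_, (sub_add_single_one_cancel ha).symm⟩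
  have hm : m.degree = d + 1 := by simpa using hn
  have hm0 : m ≠ 0 := by rintro rfl; simp at hm
  have hma : (m a + 1 : K) ≠ 0 := Nat.cast_add_one_ne_zero _
  rw [coeff_add_single_one_X_mul, coeff_powSeries_of_ne_zero ε β hm0, hm, add_tsub_cancel_right,
    prod_factorial_add_single_one, map_add, weight_single, one_smul, add_sub_cancel_right,
    Finsupp.add_apply, single_eq_same, Nat.cast_mul, Nat.cast_add_one, mul_assoc,
    mul_div_mul_left _ _ hma]

theorem powSeries_add_one (ε : ι → K) (α : K) :
    powSeries ε (α + 1) = powSeries ε α + ∑ a, X a * powSeries ε (α + ε a) := by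
  classical
  ext n
  rw [map_add, map_sum]
  obtain hn | hn | ⟨d, hn⟩ : n.degree = 0 ∨ n.degree = 1 ∨ ∃ d, n.degree = d + 2 := by
    rcases n.degree with _ | _ | d <;> simp
  · obtain rfl := (degree_eq_zero_iff n).mp hn
    simp only [coeff_zero_powSeries, coeff_zero_X_mul, Finset.sum_const_zero, add_zero]
  · obtain ⟨b, rfl⟩ : n ∈ Set.range fun a : ι => single a 1 := by rwa [range_single_one]
    simp only [coeff_single_one_powSeries, coeff_single_one_X_mul, coeff_zero_powSeries,
      Finset.sum_ite_eq', Finset.mem_univ, if_true]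
  · have hn0 : n ≠ 0 := by rintro rfl; simp at hn
    have hshift (a : ι) : weight ε n - ε a + (α + ε a) - 1 = weight ε n + α - 1 := by ring
    simp only [coeff_X_mul_powSeries ε _ hn, hshift, coeff_powSeries_of_ne_zero ε _ hn0, hn,
      ← Finset.sum_div, ← Finset.sum_mul, sum_mul_add_eq_degree_mul_add_weight]
    rw [← add_div, ← add_assoc, add_sub_cancel_right, Nat.add_succ_sub_one,
      add_one_mul_eval_descPochhammer_succ]
    push_cast
    rfl

theorem powSeries_add (ε : ι → K) (α β : K) :
    powSeries ε (α + β) = powSeries ε α * powSeries ε β := by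
  classical
  refine (sub_eq_zero.mp (eq_zero_of_add_one_eq_add_sum ε
    (D := fun α => powSeries ε α * powSeries ε β - powSeries ε (α + β)) ?_ ?_ ?_ α)).symm
  · intro n
    choose p hp using exists_eval_eq_coeff_powSeries ε
    refine ⟨∑ ij ∈ Finset.HasAntidiagonal.antidiagonal n,
      p ij.1 * Polynomial.C (coeff ij.2 (powSeries ε β)) -
        (p n).comp (Polynomial.X + Polynomial.C β), fun α => ?_⟩
    simp [coeff_mul, hp, Polynomial.eval_finsetSum]
  · simp
  · intro α
    simp only [add_right_comm α _ β, powSeries_add_one, add_mul, mul_sub, Finset.sum_mul,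
      Finset.sum_sub_distrib, mul_assoc]
    abel

end FormalSeries

section Convergence

theorem hasSum_sum_mul_antidiagonal_of_summable_norm {A R : Type*} [AddCommMonoid A]
    [Finset.HasAntidiagonal A] [NormedRing R] [CompleteSpace R] {f g : A → R} {s t : R}
    (hf : HasSum f s) (hg : HasSum g t) (hfn : Summable fun n => ‖f n‖)
    (hgn : Summable fun n => ‖g n‖) :
    HasSum (fun n => ∑ ij ∈ Finset.HasAntidiagonal.antidiagonal n, f ij.1 * g ij.2) (s * t) := by
  have hfg := summable_mul_of_summable_norm hfn hgn
  rw [← hf.tsum_eq, ← hg.tsum_eq,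
    hf.summable.tsum_mul_tsum_eq_tsum_sum_antidiagonal hg.summable hfg]
  exact (summable_sum_mul_antidiagonal_of_summable_mul hfg).hasSum

variable {ι 𝕜 : Type*} [Fintype ι]

/-- Unconditional convergence of the power series `f` at the point `x` to the value `s`. It is
phrased with `HasSum` because the evaluation of power series in Mathlib requires a linear
topology on the target, which excludes `ℝ` and `ℂ`. -/
def HasSumAt [NormedField 𝕜] (f : MvPowerSeries ι 𝕜) (x : ι → 𝕜) (s : 𝕜) : Prop :=
  HasSum (fun n => coeff n f * ∏ a, x a ^ n a) s

namespace HasSumAt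

section NormedField

variable [NormedField 𝕜] {f g : MvPowerSeries ι 𝕜} {x : ι → 𝕜} {s t : 𝕜}

theorem monomial (n : ι →₀ ℕ) (c : 𝕜) (x : ι → 𝕜) :
    HasSumAt (monomial n c) x (c * ∏ a, x a ^ n a) := by
  classical
  rw [HasSumAt]
  convert hasSum_single n fun m hm => ?_ using 1
  · rw [coeff_monomial_same]
  · rw [coeff_monomial_ne hm, zero_mul]

theorem one (x : ι → 𝕜) : HasSumAt 1 x 1 := by
  simpa [monomial_zero_one] using monomial 0 1 x

theorem X (a : ι) (x : ι → 𝕜) : HasSumAt (X a) x (x a) := by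
  classical
  simpa [MvPowerSeries.X, single_apply] using monomial (single a 1) 1 x

theorem add (hf : HasSumAt f x s) (hg : HasSumAt g x t) : HasSumAt (f + g) x (s + t) := by
  simpa only [HasSumAt, map_add, add_mul] using HasSum.add hf hg

theorem sum {κ : Type*} (u : Finset κ) {F : κ → MvPowerSeries ι 𝕜} {v : κ → 𝕜}
    (hF : ∀ i ∈ u, HasSumAt (F i) x (v i)) : HasSumAt (∑ i ∈ u, F i) x (∑ i ∈ u, v i) := by
  simpa only [HasSumAt, map_sum, Finset.sum_mul] using hasSum_sum hF

theorem C_mul (c : 𝕜) (hf : HasSumAt f x s) : HasSumAt (C c * f) x (c * s) := by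
  simpa only [HasSumAt, coeff_C_mul, mul_assoc] using HasSum.mul_left c hf

end NormedField

theorem mul [RCLike 𝕜] {f g : MvPowerSeries ι 𝕜} {x : ι → 𝕜} {s t : 𝕜} (hf : HasSumAt f x s)
    (hg : HasSumAt g x t) : HasSumAt (f * g) x (s * t) := by
  classical
  refine (hasSum_sum_mul_antidiagonal_of_summable_norm hf hg (HasSum.summable hf).norm
    (HasSum.summable hg).norm).congr_fun fun n => ?_
  rw [coeff_mul, Finset.sum_mul]
  refine Finset.sum_congr rfl fun ij hij => ?_
  rw [← Finset.HasAntidiagonal.mem_antidiagonal.mp hij]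
  simp only [Finsupp.add_apply, pow_add, Finset.prod_mul_distrib]
  ring

end HasSumAt

end Convergence

section Bounds

variable {ι : Type*} [Fintype ι]

theorem norm_eval_descPochhammer_le {R : Type*} [NormedCommRing R] [NormOneClass R] (d : ℕ)
    (z : R) : ‖(descPochhammer R d).eval z‖ ≤ (‖z‖ + d) ^ d := by
  rw [descPochhammer_eval_eq_prod_range]
  calc ‖∏ j ∈ Finset.range d, (z - j)‖ ≤ ∏ j ∈ Finset.range d, ‖z - j‖ :=
        Finset.norm_prod_le _ _
    _ ≤ ∏ _j ∈ Finset.range d, (‖z‖ + d) := by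
        refine Finset.prod_le_prod (fun _ _ => norm_nonneg _) fun j hj => ?_
        have hjd : (j : ℝ) ≤ d := Nat.cast_le.mpr (Finset.mem_range.mp hj).le
        have hj : ‖(j : R)‖ ≤ j := by simpa using Nat.norm_cast_le (α := R) j
        linarith [norm_sub_le z j]
    _ = (‖z‖ + d) ^ d := by rw [Finset.prod_const, Finset.card_range]

theorem summable_prod_apply {κ : Type*} {f : ι → κ → ℝ} (hf : ∀ a i, 0 ≤ f a i)
    (hsum : ∀ a, Summable (f a)) : Summable fun n : ι → κ => ∏ a, f a (n a) := by
  classical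
  refine summable_of_sum_le (c := ∏ a, ∑' i, f a i)
    (fun n => Finset.prod_nonneg fun a _ => hf a _) fun u => ?_
  have hsubset : u ⊆ Fintype.piFinset fun a => u.image fun n => n a := fun n hn =>
    Fintype.mem_piFinset.mpr fun a => Finset.mem_image_of_mem _ hn
  calc ∑ n ∈ u, ∏ a, f a (n a)
      ≤ ∑ n ∈ Fintype.piFinset fun a => u.image fun n => n a, ∏ a, f a (n a) :=
        Finset.sum_le_sum_of_subset_of_nonneg hsubset fun n _ _ =>
          Finset.prod_nonneg fun a _ => hf a _
    _ = ∏ a, ∑ i ∈ u.image fun n => n a, f a i := (Finset.prod_univ_sum _ _).symm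
    _ ≤ ∏ a, ∑' i, f a i :=
        Finset.prod_le_prod (fun a _ => Finset.sum_nonneg fun i _ => hf a i) fun a _ =>
          (hsum a).sum_le_tsum _ fun i _ => hf a i

theorem summable_pow_degree {κ : Type*} [Finite κ] {r : ℝ} (hr0 : 0 ≤ r) (hr1 : r < 1) :
    Summable fun n : κ →₀ ℕ => r ^ n.degree := by
  cases nonempty_fintype κ
  have hprod : Summable fun n : κ → ℕ => ∏ a, r ^ n a :=
    summable_prod_apply (fun _ _ => pow_nonneg hr0 _) fun _ => summable_geometric_of_lt_one hr0 hr1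
  refine (equivFunOnFinite.summable_iff.mpr hprod).congr fun n => ?_
  simp [degree_eq_sum, Finset.prod_pow_eq_pow_sum]

theorem norm_weight_le {E : Type*} [SeminormedAddCommGroup E] (ε : ι → E) (n : ι →₀ ℕ) :
    ‖weight ε n‖ ≤ (∑ a, ‖ε a‖) * n.degree := by
  rw [weight_eq_sum, Finset.sum_mul]
  refine norm_sum_le_of_le _ fun a _ => (norm_nsmul_le).trans ?_
  rw [mul_comm]
  gcongr
  exact le_degree a n

theorem pow_degree_div_prod_factorial_le {t : ℝ} (ht : 0 ≤ t) (n : ι →₀ ℕ) :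
    t ^ n.degree / (∏ a, (n a)! : ℕ) ≤ Real.exp t ^ Fintype.card ι := by
  calc t ^ n.degree / (∏ a, (n a)! : ℕ) = ∏ a, t ^ n a / (n a)! := by
        rw [Finset.prod_div_distrib, Finset.prod_pow_eq_pow_sum, degree_eq_sum, Nat.cast_prod]
    _ ≤ ∏ _a : ι, Real.exp t :=
        Finset.prod_le_prod (fun _ _ => by positivity) fun a _ =>
          Real.pow_div_factorial_le_exp t ht (n a)
    _ = Real.exp t ^ Fintype.card ι := by rw [Finset.prod_const, Finset.card_univ]

theorem norm_prod_pow_le {𝕜 : Type*} [NormedField 𝕜] (x : ι → 𝕜) (n : ι →₀ ℕ) :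
    ‖∏ a, x a ^ n a‖ ≤ ‖x‖ ^ n.degree := by
  rw [norm_prod, degree_eq_sum, ← Finset.prod_pow_eq_pow_sum]
  refine Finset.prod_le_prod (fun _ _ => norm_nonneg _) fun a _ => ?_
  rw [norm_pow]
  gcongr
  exact norm_le_pi_norm x a

end Bounds

section LocalExponential

variable {L : ℂ → ℂ} {R : ℝ}

theorem one_add_natCast_mul_eq_pow
    (hmul : ∀ α β, ‖α‖ ≤ R → ‖β‖ ≤ R → ‖α + β‖ ≤ R →
      1 + (α + β) * L (α + β) = (1 + α * L α) * (1 + β * L β))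
    {γ : ℂ} {m : ℕ} (hγ : m * ‖γ‖ ≤ R) : 1 + m * γ * L (m * γ) = (1 + γ * L γ) ^ m := by
  induction m with
  | zero => simp
  | succ m ih =>
    rw [Nat.cast_add_one, add_one_mul] at hγ ⊢
    have hm : 0 ≤ m * ‖γ‖ := by positivity
    have hmγ : ‖m * γ‖ = m * ‖γ‖ := by rw [norm_mul, Complex.norm_natCast]
    have hsum : ‖m * γ + γ‖ ≤ R := (norm_add_le _ _).trans (hmγ ▸ hγ)
    rw [hmul _ _ (by linarith [norm_nonneg γ]) (by linarith) hsum,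
      ih (by linarith [norm_nonneg γ]), pow_succ]

theorem one_add_mul_eq_exp (hL : ContinuousAt L 0)
    (hmul : ∀ α β, ‖α‖ ≤ R → ‖β‖ ≤ R → ‖α + β‖ ≤ R →
      1 + (α + β) * L (α + β) = (1 + α * L α) * (1 + β * L β))
    {α : ℂ} (hα : ‖α‖ ≤ R) : 1 + α * L α = Complex.exp (α * L 0) := by
  have hcancel {m : ℕ} (hm : m ≠ 0) : m * (α / m) = α :=
    mul_div_cancel₀ α (Nat.cast_ne_zero.mpr hm)
  have hpow {m : ℕ} (hm : m ≠ 0) : 1 + α * L α = (1 + α / m * L (α / m)) ^ m := by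
    have hnorm : m * ‖α / m‖ ≤ R := by
      rwa [← Complex.norm_natCast, ← norm_mul, hcancel hm]
    simpa only [hcancel hm] using one_add_natCast_mul_eq_pow hmul hnorm
  have hlim : Tendsto (fun m : ℕ => m * (α / m * L (α / m))) atTop (𝓝 (α * L 0)) := by
    refine ((hL.tendsto.comp (tendsto_const_div_atTop_nhds_zero_nat α)).const_mul α).congr' ?_
    filter_upwards [eventually_ne_atTop 0] with m hm
    rw [← mul_assoc, hcancel hm, Function.comp_apply]
  refine tendsto_nhds_unique (tendsto_const_nhds.congr' ?_)
    (Complex.tendsto_one_add_pow_exp_of_tendsto hlim)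
  filter_upwards [eventually_ne_atTop 0] with m hm using hpow hm

end LocalExponential

section BoxCoxSum

variable {ι : Type*} [Fintype ι]

/-- A bound for `‖α‖` on which the series `boxCoxSeries ε α` are controlled uniformly. It is at
least `1` and at least `‖ε a‖` for every `a`. -/
noncomputable def exponentBound (ε : ι → ℂ) : ℝ :=
  1 + ∑ a, ‖ε a‖

/-- A radius on which all the series `boxCoxSeries ε α` with `‖α‖ ≤ exponentBound ε` converge. It
is half of the radius that the coefficient bound `norm_coeff_boxCoxSeries_le` yields. -/
noncomputable def convergenceRadius (ε : ι → ℂ) : ℝ :=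
  (2 * (2 * exponentBound ε * Real.exp 1 ^ Fintype.card ι))⁻¹

/-- The sum of the series `boxCoxSeries ε α` at `x`. -/
noncomputable def boxCoxSum (ε : ι → ℂ) (α : ℂ) (x : ι → ℂ) : ℂ :=
  ∑' n, coeff n (boxCoxSeries ε α) * ∏ a, x a ^ n a

theorem one_le_exponentBound (ε : ι → ℂ) : 1 ≤ exponentBound ε :=
  le_add_of_nonneg_right (Finset.sum_nonneg fun _ _ => norm_nonneg _)

theorem norm_le_exponentBound (ε : ι → ℂ) (a : ι) : ‖ε a‖ ≤ exponentBound ε := by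
  have := Finset.single_le_sum (fun b _ => norm_nonneg (ε b)) (Finset.mem_univ a)
  rw [exponentBound]
  linarith

theorem convergenceRadius_pos (ε : ι → ℂ) : 0 < convergenceRadius ε := by
  have := one_le_exponentBound ε
  rw [convergenceRadius]
  positivity

variable {ε : ι → ℂ} {α : ℂ} {x : ι → ℂ}

theorem norm_eval_descPochhammer_weight_le (hα : ‖α‖ ≤ exponentBound ε) {n : ι →₀ ℕ}
    (hn : n ≠ 0) :
    ‖(descPochhammer ℂ (n.degree - 1)).eval (weight ε n + α - 1)‖ ≤
      (2 * exponentBound ε * n.degree) ^ n.degree := by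
  obtain ⟨d, hd⟩ : ∃ d, n.degree = d + 1 :=
    Nat.exists_eq_succ_of_ne_zero (mt (degree_eq_zero_iff n).mp hn)
  have hR := one_le_exponentBound ε
  have hdeg : (1 : ℝ) ≤ n.degree := by simp [hd]
  have hweight : ‖weight ε n‖ ≤ (exponentBound ε - 1) * n.degree := by
    simpa [exponentBound] using norm_weight_le ε n
  have hbase : ‖weight ε n + α - 1‖ + d ≤ 2 * exponentBound ε * n.degree := by
    have hsub := norm_sub_le (weight ε n + α) 1
    have hadd := norm_add_le (weight ε n) α
    have hdeg_eq : (n.degree : ℝ) = d + 1 := by simp [hd]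
    rw [norm_one] at hsub
    nlinarith
  have hone : 1 ≤ 2 * exponentBound ε * n.degree := by nlinarith
  calc ‖(descPochhammer ℂ (n.degree - 1)).eval (weight ε n + α - 1)‖
      ≤ (‖weight ε n + α - 1‖ + d) ^ d := by
        rw [hd, add_tsub_cancel_right]
        exact norm_eval_descPochhammer_le d _
    _ ≤ (2 * exponentBound ε * n.degree) ^ d := by gcongr
    _ ≤ (2 * exponentBound ε * n.degree) ^ n.degree := pow_le_pow_right₀ hone (by lia)

theorem norm_coeff_boxCoxSeries_le (hα : ‖α‖ ≤ exponentBound ε) (n : ι →₀ ℕ) :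
    ‖coeff n (boxCoxSeries ε α)‖ ≤
      (2 * exponentBound ε * Real.exp 1 ^ Fintype.card ι) ^ n.degree := by
  have hR := one_le_exponentBound ε
  rw [coeff_boxCoxSeries]
  split_ifs with hn
  · rw [norm_zero]
    positivity
  rw [norm_div, Complex.norm_natCast]
  calc ‖(descPochhammer ℂ (n.degree - 1)).eval (weight ε n + α - 1)‖ / (∏ a, (n a)! : ℕ)
      ≤ (2 * exponentBound ε * n.degree) ^ n.degree / (∏ a, (n a)! : ℕ) := by
        gcongr
        exact norm_eval_descPochhammer_weight_le hα hn
    _ = (2 * exponentBound ε) ^ n.degree *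
          ((n.degree : ℝ) ^ n.degree / (∏ a, (n a)! : ℕ)) := by
        rw [mul_pow, mul_div_assoc]
    _ ≤ (2 * exponentBound ε) ^ n.degree * Real.exp n.degree ^ Fintype.card ι := by
        gcongr
        exact pow_degree_div_prod_factorial_le (Nat.cast_nonneg _) n
    _ = (2 * exponentBound ε * Real.exp 1 ^ Fintype.card ι) ^ n.degree := by
        rw [← Real.exp_one_pow, pow_right_comm, ← mul_pow]

theorem norm_coeff_boxCoxSeries_mul_prod_le (hα : ‖α‖ ≤ exponentBound ε)
    (hx : ‖x‖ ≤ convergenceRadius ε) (n : ι →₀ ℕ) :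
    ‖coeff n (boxCoxSeries ε α) * ∏ a, x a ^ n a‖ ≤ (1 / 2) ^ n.degree := by
  have hR := one_le_exponentBound ε
  calc ‖coeff n (boxCoxSeries ε α) * ∏ a, x a ^ n a‖
      ≤ (2 * exponentBound ε * Real.exp 1 ^ Fintype.card ι) ^ n.degree *
          convergenceRadius ε ^ n.degree := by
        rw [norm_mul]
        gcongr
        · exact norm_coeff_boxCoxSeries_le hα n
        · exact (norm_prod_pow_le x n).trans (by gcongr)
    _ = (1 / 2) ^ n.degree := by
        rw [← mul_pow, convergenceRadius]
        congr 1
        field_simp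

theorem hasSumAt_boxCoxSeries (hα : ‖α‖ ≤ exponentBound ε) (hx : ‖x‖ ≤ convergenceRadius ε) :
    HasSumAt (boxCoxSeries ε α) x (boxCoxSum ε α x) :=
  (Summable.of_norm_bounded (summable_pow_degree one_half_pos.le one_half_lt_one)
    (norm_coeff_boxCoxSeries_mul_prod_le hα hx)).hasSum

theorem hasSumAt_powSeries (hα : ‖α‖ ≤ exponentBound ε) (hx : ‖x‖ ≤ convergenceRadius ε) :
    HasSumAt (powSeries ε α) x (1 + α * boxCoxSum ε α x) :=
  (HasSumAt.one x).add ((hasSumAt_boxCoxSeries hα hx).C_mul α)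

theorem continuous_coeff_boxCoxSeries (ε : ι → ℂ) (n : ι →₀ ℕ) :
    Continuous fun α => coeff n (boxCoxSeries ε α) := by
  simp only [coeff_boxCoxSeries]
  split_ifs
  · exact continuous_const
  · fun_prop

theorem continuousOn_boxCoxSum (ε : ι → ℂ) :
    ContinuousOn (fun p : ℂ × (ι → ℂ) => boxCoxSum ε p.1 p.2)
      (Metric.closedBall 0 (exponentBound ε) ×ˢ Metric.closedBall 0 (convergenceRadius ε)) := by
  refine continuousOn_tsum (fun n => Continuous.continuousOn ?_)
    (summable_pow_degree one_half_pos.le one_half_lt_one) fun n p hp => ?_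
  · exact ((continuous_coeff_boxCoxSeries ε n).comp continuous_fst).mul (by fun_prop)
  · exact norm_coeff_boxCoxSeries_mul_prod_le (mem_closedBall_zero_iff.mp hp.1)
      (mem_closedBall_zero_iff.mp hp.2) n

theorem boxCoxSum_apply_zero (ε : ι → ℂ) (α : ℂ) : boxCoxSum ε α 0 = 0 := by
  refine (tsum_congr fun n => ?_).trans tsum_zero
  rcases eq_or_ne n 0 with rfl | hn
  · rw [coeff_boxCoxSeries, if_pos rfl, zero_mul]
  · obtain ⟨a, ha⟩ := Finsupp.ne_iff.mp hn
    rw [Finset.prod_eq_zero (Finset.mem_univ a) (zero_pow ha), mul_zero]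

theorem one_add_mul_boxCoxSum_eq_exp (hα : ‖α‖ ≤ exponentBound ε)
    (hx : ‖x‖ ≤ convergenceRadius ε) :
    1 + α * boxCoxSum ε α x = Complex.exp (α * boxCoxSum ε 0 x) := by
  refine one_add_mul_eq_exp (L := fun α => boxCoxSum ε α x) ?_ (fun α β hα hβ hαβ => ?_) hα
  · have hR : 0 < exponentBound ε := zero_lt_one.trans_le (one_le_exponentBound ε)
    have hcont : ContinuousOn (fun α => boxCoxSum ε α x)
        (Metric.closedBall 0 (exponentBound ε)) :=
      (continuousOn_boxCoxSum ε).comp (f := fun α => (α, x)) (by fun_prop) fun α hα =>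
        ⟨hα, mem_closedBall_zero_iff.mpr hx⟩
    exact hcont.continuousAt (Metric.closedBall_mem_nhds 0 hR)
  · refine (hasSumAt_powSeries hαβ hx).unique ?_
    rw [powSeries_add]
    exact (hasSumAt_powSeries hα hx).mul (hasSumAt_powSeries hβ hx)

theorem exp_boxCoxSum_zero (hx : ‖x‖ ≤ convergenceRadius ε) :
    Complex.exp (boxCoxSum ε 0 x) =
      1 + ∑ a, x a * Complex.exp (ε a * boxCoxSum ε 0 x) := by
  have hexp {α : ℂ} (hα : ‖α‖ ≤ exponentBound ε) :
      HasSumAt (powSeries ε α) x (Complex.exp (α * boxCoxSum ε 0 x)) :=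
    one_add_mul_boxCoxSum_eq_exp hα hx ▸ hasSumAt_powSeries hα hx
  have hrec : powSeries ε 1 = 1 + ∑ a, X a * powSeries ε (ε a) := by
    simpa only [zero_add, powSeries_zero] using powSeries_add_one ε 0
  have hleft := hexp (α := 1) (by simpa using one_le_exponentBound ε)
  rw [one_mul, hrec] at hleft
  exact hleft.unique <| (HasSumAt.one x).add <| HasSumAt.sum _ fun a _ =>
    (HasSumAt.X a x).mul (hexp (norm_le_exponentBound ε a))

theorem tendsto_boxCoxSum_zero (ε : ι → ℂ) : Tendsto (boxCoxSum ε 0) (𝓝 0) (𝓝 0) := by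
  have hR : 0 ≤ exponentBound ε := zero_le_one.trans (one_le_exponentBound ε)
  have hcont : ContinuousOn (boxCoxSum ε 0) (Metric.closedBall 0 (convergenceRadius ε)) :=
    (continuousOn_boxCoxSum ε).comp (f := fun x => (0, x)) (by fun_prop) fun x hx =>
      ⟨Metric.mem_closedBall_self hR, hx⟩
  simpa only [ContinuousAt, boxCoxSum_apply_zero] using
    hcont.continuousAt (Metric.closedBall_mem_nhds 0 (convergenceRadius_pos ε))

end BoxCoxSum

section Uniqueness

variable {ι : Type*} [Fintype ι]

theorem eventuallyEq_of_exp_eq_one_add_sum {β : Type*} {l : Filter β} (ε : ι → ℂ)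
    {x : β → ι → ℂ} {u v : β → ℂ} (hx : Tendsto x l (𝓝 0)) (hu : Tendsto u l (𝓝 0))
    (hv : Tendsto v l (𝓝 0))
    (hxu : ∀ᶠ b in l, Complex.exp (u b) = 1 + ∑ a, x b a * Complex.exp (ε a * u b))
    (hxv : ∀ᶠ b in l, Complex.exp (v b) = 1 + ∑ a, x b a * Complex.exp (ε a * v b)) :
    u =ᶠ[l] v := by
  let F : (ι → ℂ) × ℂ → ℂ := fun p => Complex.exp p.2 - ∑ a, p.1 a * Complex.exp (ε a * p.2)
  have hF : ContDiff ℂ 1 F := by fun_prop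
  have hF' := hF.contDiffAt.hasStrictFDerivAt one_ne_zero (x := 0)
  have hpartial : fderiv ℂ F 0 ∘L .inr ℂ (ι → ℂ) ℂ = .id ℂ ℂ := by
    have hcomp : F ∘ Prod.mk 0 = Complex.exp := by
      ext w
      simp [F]
    have hchain := hF'.hasFDerivAt.comp_hasDerivAt 0
      (ContinuousLinearMap.inr ℂ (ι → ℂ) ℂ).hasDerivAt
    rw [hcomp] at hchain
    ext
    simpa using hchain.unique (Complex.hasDerivAt_exp 0)
  have himplicit := hF'.eventually_apply_eq_iff_implicitFunctionOfProdDomain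
    (hpartial ▸ ContinuousLinearMap.isInvertible_equiv (f := .refl ℂ ℂ))
  have hF0 : F 0 = 1 := by simp [F]
  filter_upwards [(hx.prodMk_nhds hu).eventually himplicit,
    (hx.prodMk_nhds hv).eventually himplicit, hxu, hxv] with b hiff_u hiff_v hb_u hb_v
  rw [hF0] at hiff_u hiff_v
  exact (hiff_u.mp (sub_eq_iff_eq_add.mpr hb_u)).symm.trans
    (hiff_v.mp (sub_eq_iff_eq_add.mpr hb_v))

theorem eventually_hasSumAt_boxCoxSeries_zero {β : Type*} {l : Filter β} {ε : ι → ℂ}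
    {x : β → ι → ℂ} {w : β → ℂ} (hx : Tendsto x l (𝓝 0)) (hw : Tendsto w l (𝓝 0))
    (hxw : ∀ᶠ b in l, Complex.exp (w b) = 1 + ∑ a, x b a * Complex.exp (ε a * w b)) :
    ∀ᶠ b in l, HasSumAt (boxCoxSeries ε 0) (x b) (w b) := by
  have hsmall : ∀ᶠ b in l, ‖x b‖ ≤ convergenceRadius ε := by
    have hnorm : Tendsto (fun b => ‖x b‖) l (𝓝 0) := tendsto_zero_iff_norm_tendsto_zero.mp hx
    exact hnorm.eventually_le_const (convergenceRadius_pos ε)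
  have hw_eq : w =ᶠ[l] boxCoxSum ε 0 ∘ x :=
    eventuallyEq_of_exp_eq_one_add_sum ε hx hw ((tendsto_boxCoxSum_zero ε).comp hx) hxw
      (hsmall.mono fun _ => exp_boxCoxSum_zero)
  have hzero : ‖(0 : ℂ)‖ ≤ exponentBound ε := by
    simpa using zero_le_one.trans (one_le_exponentBound ε)
  filter_upwards [hsmall, hw_eq] with b hb hwb
  exact hwb ▸ hasSumAt_boxCoxSeries hzero hb

end Uniqueness

theorem exp_log_neg_eq_one_add_sum {ι : Type*} [Fintype ι] {ε q : ι → ℂ} {y : ℂ} (hy : -y ≠ 0)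
    (heq : 1 + y + ∑ a, q a * Complex.exp (ε a *
      ((Real.pi : ℂ) * Complex.I + Complex.log (-y))) = 0) :
    Complex.exp (Complex.log (-y)) = 1 + ∑ a,
      Complex.exp ((Real.pi : ℂ) * Complex.I * ε a) * q a *
        Complex.exp (ε a * Complex.log (-y)) := by
  have hterm (a : ι) : Complex.exp ((Real.pi : ℂ) * Complex.I * ε a) * q a *
      Complex.exp (ε a * Complex.log (-y)) =
        q a * Complex.exp (ε a * ((Real.pi : ℂ) * Complex.I + Complex.log (-y))) := by
    rw [mul_add, Complex.exp_add, mul_comm (ε a) (Real.pi * Complex.I)]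
    ring
  rw [Complex.exp_log hy, Finset.sum_congr rfl fun a _ => hterm a]
  linear_combination -heq

theorem statement5_general {ι : Type*} [Fintype ι] (ε : ι → ℂ) (y : (ι → ℂ) → ℂ)
    (hy : ContinuousAt y 0) (hy0 : y 0 = -1)
    (heq : ∀ᶠ q in 𝓝 (0 : ι → ℂ), 1 + y q + ∑ a, q a * Complex.exp (ε a *
      ((Real.pi : ℂ) * Complex.I + Complex.log (-(y q)))) = 0) :
    ∀ᶠ q in 𝓝 (0 : ι → ℂ), HasSum
      (fun n : ι →₀ ℕ =>
        (if n = 0 then (0 : ℂ)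
          else (descPochhammer ℂ ((∑ a, n a) - 1)).eval ((∑ a, ε a * (n a : ℂ)) - 1) /
              ∏ a, ((n a)! : ℂ))
          * ∏ a, (Complex.exp ((Real.pi : ℂ) * Complex.I * ε a) * q a) ^ n a)
      (Complex.log (-(y q))) := by
  let x (q : ι → ℂ) (a : ι) : ℂ := Complex.exp ((Real.pi : ℂ) * Complex.I * ε a) * q a
  have hx : Tendsto x (𝓝 0) (𝓝 0) := by
    have hcont : Continuous x := by fun_prop
    simpa [x, Pi.zero_def] using hcont.tendsto 0
  have hneg : Tendsto (fun q => -(y q)) (𝓝 0) (𝓝 1) := by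
    simpa [hy0] using hy.tendsto.neg
  have hlog : Tendsto (fun q => Complex.log (-(y q))) (𝓝 0) (𝓝 0) := by
    simpa using hneg.clog Complex.one_mem_slitPlane
  have hlog_eq : ∀ᶠ q in 𝓝 0, Complex.exp (Complex.log (-(y q))) =
      1 + ∑ a, x q a * Complex.exp (ε a * Complex.log (-(y q))) := by
    filter_upwards [heq, hneg.eventually_ne one_ne_zero] with q hq hne
    exact exp_log_neg_eq_one_add_sum hne hq
  filter_upwards [eventually_hasSumAt_boxCoxSeries_zero hx hlog hlog_eq] with q hq
  simpa only [HasSumAt, coeff_boxCoxSeries, degree_eq_sum, weight_eq_sum, nsmul_eq_mul,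
    mul_comm (ε _), add_zero, Nat.cast_prod] using hq

/-- let `y` be the holomorphic function on a neighborhood `V` of `0` in
`ℂ^{k+1}` with `y(0) = −1` solving the mirror curve equation
`1 + y(q̃) + ∑ₐ q̃ₐ exp(εₐ(πi + Log(−y(q̃)))) = 0`. Then, near `0`, one has the absolutely
convergent expansion of `Log(−y(q̃))` as the sum over nonzero multi-indices
`(n₀, …, n_k)` of `(ε₀n₀ + ⋯ + ε_k n_k − 1)_(n₀+⋯+n_k−1) / (n₀! ⋯ n_k!) ·
∏ₐ (e^{πiεₐ} q̃ₐ)^{nₐ}`, where `(a)_m` is the falling factorial. -/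
theorem statement5 (k : ℕ) (ε : Fin (k + 1) → ℚ)
    (V : Set (Fin (k + 1) → ℂ)) (hV : IsOpen V) (h0V : (0 : Fin (k + 1) → ℂ) ∈ V)
    (y : (Fin (k + 1) → ℂ) → ℂ) (hy : DifferentiableOn ℂ y V) (hy0 : y 0 = -1)
    (heq : ∀ q ∈ V, 1 + y q + ∑ a : Fin (k + 1),
        q a * Complex.exp ((ε a : ℂ) * ((Real.pi : ℂ) * Complex.I
          + Complex.log (-(y q)))) = 0) :
    ∀ᶠ q in nhds (0 : Fin (k + 1) → ℂ), HasSum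
      (fun n : Fin (k + 1) →₀ ℕ =>
        (if n = 0 then (0 : ℂ)
          else (descPochhammer ℂ ((∑ a : Fin (k + 1), n a) - 1)).eval
                ((∑ a : Fin (k + 1), (ε a : ℂ) * (n a : ℂ)) - 1) /
              ∏ a : Fin (k + 1), ((n a).factorial : ℂ))
          * ∏ a : Fin (k + 1),
              (Complex.exp ((Real.pi : ℂ) * Complex.I * (ε a : ℂ)) * q a) ^ n a)
      (Complex.log (-(y q))) := by
  have hV0 : V ∈ 𝓝 0 := hV.mem_nhds h0V
  convert statement5_general (fun a => (ε a : ℂ)) y (hy.differentiableAt hV0).continuousAt hy0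
    (eventually_of_mem hV0 heq)
end

section
/- Let s_1, d_0 be positive integers, set q := d_0/s_1 and ε_1 := {q} (the fractional part of q), let f be an integer, and let ε_2, ε_3 be rational numbers with ε_1 + ε_2 + ε_3 ∈ ℤ. Then, writing (−1)^t := e^{πi t} for rational t, one has (−1)^{⌈f q − ε_2⌉ + ⌊q⌋ + ε_1 + ε_2 + ε_3 − 1} = −(−1)^{q(−f−1) − ε_3 − {ε_2 − f ε_1}}. -/
/-!
The two exponents always add up to `-1`: the ceiling on the left and the fractional part on the
right are governed by the same number `ε₂ - f ε₁`, because `f ⌊q⌋` is an integer. The condition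
`ε₁ + ε₂ + ε₃ ∈ ℤ` makes the left exponent an integer `n`, and `n` and `-1 - n` have opposite
parity.
-/

section FloorRing

variable {R : Type*} [CommRing R] [LinearOrder R] [IsStrictOrderedRing R] [FloorRing R]

theorem ceil_intCast_mul_sub (f : ℤ) (q x : R) :
    ⌈f * q - x⌉ = f * ⌊q⌋ - ⌊x - f * Int.fract q⌋ := by
  have split_q : f * q - x = -(x - f * Int.fract q) + ((f * ⌊q⌋ : ℤ) : R) := by
    push_cast
    linear_combination -(f : R) * Int.floor_add_fract q
  rw [split_q, Int.ceil_add_intCast, Int.ceil_neg]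
  ring

theorem localization_exponent_add_brane_exponent (f : ℤ) (q ε2 ε3 : R) :
    (⌈f * q - ε2⌉ + ⌊q⌋ + Int.fract q + ε2 + ε3 - 1) +
      (q * (-f - 1) - ε3 - Int.fract (ε2 - f * Int.fract q)) = -1 := by
  rw [ceil_intCast_mul_sub]
  push_cast
  linear_combination
    ((f : R) + 1) * Int.floor_add_fract q - Int.floor_add_fract (ε2 - f * Int.fract q)

end FloorRing

theorem exp_pi_mul_I_mul_intCast_eq_neg_of_add_eq_neg_one {n : ℤ} {w : ℂ} (h : n + w = -1) :
    Complex.exp (Real.pi * Complex.I * n) = -Complex.exp (Real.pi * Complex.I * w) := by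
  have exponent_eq : Real.pi * Complex.I * n =
      Real.pi * Complex.I * w + Real.pi * Complex.I + n * (2 * Real.pi * Complex.I) := by
    linear_combination (-Real.pi * Complex.I) * h
  rw [exponent_eq, Complex.exp_add, Complex.exp_int_mul_two_pi_mul_I, mul_one, Complex.exp_add,
    Complex.exp_pi_mul_I, mul_neg_one]

theorem statement9_general (q : ℝ) (f : ℤ) (ε2 ε3 : ℝ)
    (h : ∃ m : ℤ, Int.fract q + ε2 + ε3 = m) :
    Complex.exp (Real.pi * Complex.I *
        (⌈f * q - ε2⌉ + ⌊q⌋ + Int.fract q + ε2 + ε3 - 1 : ℝ)) =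
      -Complex.exp (Real.pi * Complex.I *
        (q * (-f - 1) - ε3 - Int.fract (ε2 - f * Int.fract q) : ℝ)) := by
  obtain ⟨m, hm⟩ := h
  have left_eq_int : (⌈f * q - ε2⌉ + ⌊q⌋ + Int.fract q + ε2 + ε3 - 1 : ℝ) =
      (⌈f * q - ε2⌉ + ⌊q⌋ + m - 1 : ℤ) := by
    push_cast
    linear_combination hm
  have exponent_sum := localization_exponent_add_brane_exponent f q ε2 ε3
  rw [left_eq_int] at exponent_sum ⊢
  exact exp_pi_mul_I_mul_intCast_eq_neg_of_add_eq_neg_one (mod_cast exponent_sum)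

/-- the sign identity converting the localization sign of the disk factor
into the framed-brane sign.  Here `q = d₀/s₁`, `ε₁ = {q}` is the fractional part of `q`,
`ε₂, ε₃ ∈ ℚ` satisfy `ε₁ + ε₂ + ε₃ ∈ ℤ`, and for rational `t` one writes
`(−1)^t := e^{πit}`.  The claim is
`(−1)^{⌈fq − ε₂⌉ + ⌊q⌋ + ε₁ + ε₂ + ε₃ − 1} = −(−1)^{q(−f−1) − ε₃ − {ε₂ − fε₁}}`. -/
theorem statement9 (s1 d0 : ℕ) (hs1 : 0 < s1) (hd0 : 0 < d0) (f : ℤ) (ε2 ε3 : ℚ)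
    (h : ∃ m : ℤ, Int.fract ((d0 : ℚ) / (s1 : ℚ)) + ε2 + ε3 = (m : ℚ)) :
    Complex.exp ((Real.pi : ℂ) * Complex.I *
        (((⌈(f : ℚ) * ((d0 : ℚ) / (s1 : ℚ)) - ε2⌉ : ℤ) + ((⌊(d0 : ℚ) / (s1 : ℚ)⌋ : ℤ) : ℚ)
          + Int.fract ((d0 : ℚ) / (s1 : ℚ)) + ε2 + ε3 - 1 : ℚ) : ℂ)) =
      -Complex.exp ((Real.pi : ℂ) * Complex.I *
        ((((d0 : ℚ) / (s1 : ℚ)) * (-(f : ℚ) - 1) - ε3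
          - Int.fract (ε2 - (f : ℚ) * Int.fract ((d0 : ℚ) / (s1 : ℚ))) : ℚ) : ℂ)) := by
  have hreal := statement9_general ((d0 / s1 : ℚ) : ℝ) f ε2 ε3 (mod_cast h)
  exact_mod_cast hreal
end

section
/- For a, b ∈ ℂ with a − b ∈ ℤ define the bracket symbol [a; b] as follows: if n := a − b ≥ 0 then [a; b] := Π_{j=0}^{n−1}(a − j), and if n < 0 then [a; b] := 1 / Π_{j=0}^{−n−1}(b − j), provided all factors b − j are nonzero. Let s_1, d_0 be positive integers, f an integer, ε_1 := {d_0/s_1}, and let ε_2, ε_3 ∈ ℚ ∩ [0,1) satisfy age := ε_1 + ε_2 + ε_3 ∈ ℤ. Let ℓ_1, ℓ_2, ℓ_3 be rational numbers with ℓ_j + ε_j ∈ ℤ for j = 1, 2, 3, and suppose L_1 := d_0/s_1 + ℓ_1 is a nonnegative integer; set L_2 := f d_0/s_1 + ℓ_2 and L_3 := −(f+1)d_0/s_1 + ℓ_3. Let z be a nonzero complex number, write (−1)^t := e^{πi t} for rational t, and define D' := −(−1)^{(d_0/s_1)(−f−1) − ε_3 − {ε_2 − f ε_1}} · (s_1/d_0)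 · z^{age} · [ Π_{a=1}^{⌊d_0/s_1⌋ + age − 1} ( f d_0/s_1 − ε_2 + a ) ] / ⌊d_0/s_1⌋! and I := z^{−age} · [d_0/s_1 − ε_1; L_1] · [f d_0/s_1 − ε_2; L_2] · [−(f+1)d_0/s_1 − ε_3; L_3]. Then, provided all bracket symbols appearing are defined (no denominator factor vanishes), D' · I = −(−1)^{(d_0/s_1)(−f−1) − {ε_2 − f ε_1} + ℓ_3} · (s_1/d_0) · [−L_3 − 1; L_2] · [0; L_1]. -/
open scoped BigOperators Classical

/-- The regularized bracket symbol `[a; b]` for `a, b ∈ ℂ` with `a − b ∈ ℤ`: if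
`n = a − b ≥ 0` it is `∏_{j=0}^{n−1} (a − j)`, and if `n < 0` it is
`1 / ∏_{j=0}^{−n−1} (b − j)` (junk value `0` if `a − b ∉ ℤ`). -/
noncomputable def bracket (a b : ℂ) : ℂ :=
  if h : ∃ n : ℤ, a - b = (n : ℂ) then
    if 0 ≤ h.choose then ∏ j ∈ Finset.range h.choose.toNat, (a - (j : ℂ))
    else (∏ j ∈ Finset.range (-h.choose).toNat, (b - (j : ℂ)))⁻¹
  else 0

/-- `[a; b]` is defined: `a − b` is an integer `n`, and if `n < 0` no denominator factor
`b − j`, `0 ≤ j ≤ −n−1`, vanishes. -/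
def BracketDefined (a b : ℂ) : Prop :=
  ∃ n : ℤ, a - b = (n : ℂ) ∧
    (0 ≤ n ∨ ∀ j ∈ Finset.range (-n).toNat, b - (j : ℂ) ≠ 0)

/-- `(−1)^t := e^{πit}` for rational `t`. -/
noncomputable def mphase (t : ℚ) : ℂ := Complex.exp ((Real.pi : ℂ) * Complex.I * (t : ℂ))

/-!
The bracket is the regularized ratio `Γ(a + 1) / Γ(b + 1)`, so it satisfies the cocycle rule
`[a; b] [b; c] = [a; c]` and the reflection rule `[a; b] = ± [-b - 1; -a - 1]`, the sign being
`(-1) ^ (b - a)`. Put `q = d₀ / s₁`, `N = ⌊q⌋`, `x = f q - ε₂`, `y = -(f + 1) q - ε₃` and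
`M = N + age - 1`, so that `-y - 1 = x + M`. The product over `a` in `D'` is `[x + M; x]` and
`1 / N!` is `[0; N]`, while reflection turns `[y; L₃]` into `± [-L₃ - 1; x + M]`. The brackets then
telescope: `[-L₃ - 1; x + M] [x + M; x] [x; L₂] = [-L₃ - 1; L₂]` and `[0; N] [N; L₁] = [0; L₁]`.
-/

lemma bracket_eq_ite {a b : ℂ} {n : ℤ} (h : a - b = n) :
    bracket a b = if 0 ≤ n then ∏ j ∈ Finset.range n.toNat, (a - j)
      else (∏ j ∈ Finset.range (-n).toNat, (b - j))⁻¹ := by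
  have hex : ∃ k : ℤ, a - b = k := ⟨n, h⟩
  have hchoose : hex.choose = n := by exact_mod_cast hex.choose_spec.symm.trans h
  rw [bracket, dif_pos hex, hchoose]

lemma bracket_eq_descPochhammer {a b : ℂ} {n : ℕ} (h : a - b = n) :
    bracket a b = (descPochhammer ℂ n).eval a := by
  rw [bracket_eq_ite (n := n) (by exact_mod_cast h), if_pos (by positivity), Int.toNat_natCast,
    descPochhammer_eval_eq_prod_range]

lemma bracket_eq_inv_descPochhammer {a b : ℂ} {n : ℕ} (h : b - a = n) :
    bracket a b = ((descPochhammer ℂ n).eval b)⁻¹ := by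
  rcases n.eq_zero_or_pos with rfl | hn
  · have hab : a - b = (0 : ℕ) := by linear_combination -h
    simp [bracket_eq_descPochhammer hab]
  · rw [bracket_eq_ite (n := -n) (by push_cast; linear_combination -h), if_neg (by omega),
      neg_neg, Int.toNat_natCast, descPochhammer_eval_eq_prod_range]

lemma bracket_inv (a b : ℂ) : (bracket a b)⁻¹ = bracket b a := by
  by_cases hint : ∃ n : ℤ, a - b = n
  · obtain ⟨n, hn⟩ := hint
    rcases Int.eq_nat_or_neg n with ⟨k, rfl | rfl⟩
    · have hab : a - b = k := by exact_mod_cast hn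
      rw [bracket_eq_descPochhammer hab, bracket_eq_inv_descPochhammer hab]
    · have hba : b - a = k := by push_cast at hn; linear_combination -hn
      rw [bracket_eq_descPochhammer hba, bracket_eq_inv_descPochhammer hba, inv_inv]
  · have hint' : ¬∃ n : ℤ, b - a = n := fun ⟨n, hn⟩ ↦
      hint ⟨-n, by push_cast; linear_combination -hn⟩
    rw [bracket, bracket, dif_neg hint, dif_neg hint', inv_zero]

lemma bracketDefined_iff {a b : ℂ} :
    BracketDefined a b ↔
      (∃ n : ℕ, a - b = n) ∨ ∃ n : ℕ, b - a = n ∧ bracket b a ≠ 0 := by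
  constructor
  · rintro ⟨n, hn, hdef⟩
    rcases le_or_gt 0 n with hn0 | hn0
    · lift n to ℕ using hn0
      exact .inl ⟨n, by exact_mod_cast hn⟩
    · have hba : b - a = (-n).toNat := by
        have hcast : (((-n).toNat : ℤ) : ℂ) = (-n : ℤ) := by rw [Int.toNat_of_nonneg (by omega)]
        push_cast at hcast
        linear_combination -hn - hcast
      refine .inr ⟨_, hba, ?_⟩
      rw [bracket_eq_descPochhammer hba, descPochhammer_eval_eq_prod_range]
      exact Finset.prod_ne_zero_iff.mpr (hdef.resolve_left (by omega))
  · rintro (⟨n, hn⟩ | ⟨n, hn, hne⟩)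
    · exact ⟨n, by exact_mod_cast hn, .inl (by positivity)⟩
    · rw [bracket_eq_descPochhammer hn, descPochhammer_eval_eq_prod_range] at hne
      refine ⟨-n, by push_cast; linear_combination -hn, .inr ?_⟩
      simpa using Finset.prod_ne_zero_iff.mp hne

lemma bracket_mul_bracket_of_natCast {a b c : ℂ} {m n : ℕ} (hab : a - b = m) (hbc : b - c = n) :
    bracket a b * bracket b c = bracket a c := by
  have hac : a - c = (m + n : ℕ) := by push_cast; linear_combination hab + hbc
  have hb : b = a - m := by linear_combination -hab
  rw [bracket_eq_descPochhammer hab, bracket_eq_descPochhammer hbc, bracket_eq_descPochhammer hac,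
    ← descPochhammer_mul, hb]
  simp

lemma BracketDefined.trans_and_mul_of_sub_eq_natCast {a b c : ℂ} {m : ℕ} (hab : a - b = m)
    (hbc : BracketDefined b c) :
    BracketDefined a c ∧ bracket a b * bracket b c = bracket a c := by
  rw [bracketDefined_iff] at hbc ⊢
  rcases hbc with ⟨n, hbc⟩ | ⟨n, hcb, hcb0⟩
  · exact ⟨.inl ⟨m + n, by push_cast; linear_combination hab + hbc⟩,
      bracket_mul_bracket_of_natCast hab hbc⟩
  rcases le_total n m with hnm | hmn
  · have hac : a - c = (m - n : ℕ) := by push_cast [hnm]; linear_combination hab - hcb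
    have hmul : bracket a c * bracket c b = bracket a b := bracket_mul_bracket_of_natCast hac hcb
    exact ⟨.inl ⟨_, hac⟩, by rw [← bracket_inv c b, ← hmul, mul_inv_cancel_right₀ hcb0]⟩
  · have hca : c - a = (n - m : ℕ) := by push_cast [hmn]; linear_combination hcb - hab
    have hmul : bracket c a * bracket a b = bracket c b := bracket_mul_bracket_of_natCast hca hab
    have ⟨hca0, hab0⟩ := mul_ne_zero_iff.mp (hmul ▸ hcb0)
    refine ⟨.inr ⟨_, hca, hca0⟩, ?_⟩
    rw [← bracket_inv c b, ← bracket_inv c a, ← hmul]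
    field_simp

lemma BracketDefined.trans_and_mul_of_ne_zero {a b c : ℂ} {m : ℕ} (hba : b - a = m)
    (hba0 : bracket b a ≠ 0) (hbc : BracketDefined b c) :
    BracketDefined a c ∧ bracket a b * bracket b c = bracket a c := by
  rw [bracketDefined_iff] at hbc ⊢
  rcases hbc with ⟨n, hbc⟩ | ⟨n, hcb, hcb0⟩
  · rcases le_total m n with hmn | hnm
    · have hac : a - c = (n - m : ℕ) := by push_cast [hmn]; linear_combination hbc - hba
      have hmul : bracket b a * bracket a c = bracket b c := bracket_mul_bracket_of_natCast hba hac
      exact ⟨.inl ⟨_, hac⟩, by rw [← bracket_inv b a, ← hmul, inv_mul_cancel_left₀ hba0]⟩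
    · have hca : c - a = (m - n : ℕ) := by push_cast [hnm]; linear_combination hba - hbc
      have hmul : bracket b c * bracket c a = bracket b a := bracket_mul_bracket_of_natCast hbc hca
      have ⟨hbc0, hca0⟩ := mul_ne_zero_iff.mp (hmul ▸ hba0)
      refine ⟨.inr ⟨_, hca, hca0⟩, ?_⟩
      rw [← bracket_inv b a, ← bracket_inv c a, ← hmul]
      field_simp
  · have hca : c - a = (n + m : ℕ) := by push_cast; linear_combination hcb + hba
    have hmul : bracket c b * bracket b a = bracket c a := bracket_mul_bracket_of_natCast hcb hba
    refine ⟨.inr ⟨_, hca, hmul ▸ mul_ne_zero hcb0 hba0⟩, ?_⟩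
    rw [← bracket_inv b a, ← bracket_inv c b, ← bracket_inv c a, ← hmul, mul_inv, mul_comm]

lemma BracketDefined.trans_and_mul {a b c : ℂ} (hab : BracketDefined a b)
    (hbc : BracketDefined b c) :
    BracketDefined a c ∧ bracket a b * bracket b c = bracket a c := by
  rcases bracketDefined_iff.mp hab with ⟨m, hab⟩ | ⟨m, hba, hba0⟩
  · exact BracketDefined.trans_and_mul_of_sub_eq_natCast hab hbc
  · exact BracketDefined.trans_and_mul_of_ne_zero hba hba0 hbc

lemma bracket_reflect_of_natCast {a b : ℂ} {n : ℕ} (h : a - b = n) :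
    bracket (-b - 1) (-a - 1) = (-1) ^ n * bracket a b := by
  have href : -b - 1 - (-a - 1) = n := by linear_combination h
  rw [bracket_eq_descPochhammer h, bracket_eq_descPochhammer href,
    ← ascPochhammer_eval_neg_eq_descPochhammer, descPochhammer_eval_eq_ascPochhammer]
  congr 1
  linear_combination h

lemma bracket_reflect {a b : ℂ} {n : ℤ} (h : a - b = n) :
    bracket (-b - 1) (-a - 1) = (-1) ^ n * bracket a b := by
  rcases Int.eq_nat_or_neg n with ⟨k, rfl | rfl⟩
  · exact_mod_cast bracket_reflect_of_natCast (by exact_mod_cast h)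
  · have hba : b - a = k := by push_cast at h; linear_combination -h
    rw [← bracket_inv (-a - 1), bracket_reflect_of_natCast hba, mul_inv, bracket_inv, zpow_neg,
      zpow_natCast]

lemma BracketDefined.reflect {a b : ℂ} (h : BracketDefined a b) :
    BracketDefined (-b - 1) (-a - 1) := by
  rw [bracketDefined_iff] at h ⊢
  rcases h with ⟨n, hn⟩ | ⟨n, hn, hne⟩
  · exact .inl ⟨n, by linear_combination hn⟩
  · refine .inr ⟨n, by linear_combination hn, ?_⟩
    rw [bracket_reflect_of_natCast hn]
    exact mul_ne_zero (pow_ne_zero n (neg_ne_zero.mpr one_ne_zero)) hne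

lemma bracket_natCast_zero (n : ℕ) : bracket n 0 = n.factorial := by
  rw [bracket_eq_descPochhammer (sub_zero _), descPochhammer_eval_eq_descFactorial,
    Nat.descFactorial_self]

lemma bracketDefined_zero_natCast (n : ℕ) : BracketDefined 0 n :=
  bracketDefined_iff.mpr <| .inr ⟨n, sub_zero _, by
    rw [bracket_natCast_zero]; exact_mod_cast n.factorial_ne_zero⟩

lemma prod_Icc_add_intCast (x : ℂ) (n : ℕ) :
    ∏ a ∈ Finset.Icc (1 : ℤ) n, (x + a) = bracket (x + n) x := by
  rw [bracket_eq_descPochhammer (add_sub_cancel_left x (n : ℂ)),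
    descPochhammer_eval_eq_ascPochhammer, add_sub_cancel_right]
  induction n with
  | zero => simp
  | succ n ih =>
    rw [ascPochhammer_succ_eval, ← ih, Nat.cast_succ,
      ← Finset.insert_Icc_right_eq_Icc_add_one (by omega), Finset.prod_insert (by simp)]
    push_cast
    ring

lemma bracket_div_factorial_mul_brackets {x y b c d : ℂ} {M N : ℕ} {m : ℤ}
    (hxy : -y - 1 = x + M) (hm : d - y = m) (hNb : BracketDefined N b) (hxc : BracketDefined x c)
    (hyd : BracketDefined y d) :
    bracket (x + M) x / N.factorial * (bracket N b * bracket x c * bracket y d) =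
      (-1) ^ m * bracket (-d - 1) c * bracket 0 b := by
  have hMx : BracketDefined (x + M) x := bracketDefined_iff.mpr (.inl ⟨M, add_sub_cancel_left x _⟩)
  have hdM : BracketDefined (-d - 1) (x + M) := hxy ▸ hyd.reflect
  have hyd_reflect : bracket y d = (-1) ^ m * bracket (-d - 1) (x + M) := by
    have hneg : y - d = (-m : ℤ) := by push_cast; linear_combination -hm
    rw [← hxy, bracket_reflect hneg, zpow_neg, mul_inv_cancel_left₀ (zpow_ne_zero m (by norm_num))]
  obtain ⟨hMc, hMxc⟩ := hMx.trans_and_mul hxc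
  have hdMc : bracket (-d - 1) (x + M) * bracket (x + M) c = bracket (-d - 1) c :=
    (hdM.trans_and_mul hMc).2
  have h0Nb : bracket 0 N * bracket N b = bracket 0 b :=
    ((bracketDefined_zero_natCast N).trans_and_mul hNb).2
  rw [← h0Nb, ← hdMc, ← hMxc, hyd_reflect, ← bracket_inv N 0, bracket_natCast_zero]
  ring

lemma mphase_add_intCast (t : ℚ) (m : ℤ) : mphase (t + m) = mphase t * (-1) ^ m := by
  simp only [mphase, Rat.cast_add, Rat.cast_intCast, mul_add, Complex.exp_add,
    mul_comm _ (m : ℂ), Complex.exp_int_mul, Complex.exp_pi_mul_I]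

lemma mphase_mul_bracket_div_factorial_mul_brackets {t y d : ℚ} {x b c : ℂ} {M N : ℕ}
    (hxy : -(y : ℂ) - 1 = x + M) (hNb : BracketDefined N b) (hxc : BracketDefined x c)
    (hyd : BracketDefined y d) :
    mphase t * (bracket (x + M) x / N.factorial * (bracket N b * bracket x c * bracket y d)) =
      mphase (t + (d - y)) * bracket (-d - 1) c * bracket 0 b := by
  have ⟨k, hk, _⟩ := hyd
  have hdy : d - y = (-k : ℤ) := by
    have hyd_sub : y - d = k := by exact_mod_cast hk
    push_cast
    linear_combination -hyd_sub
  rw [bracket_div_factorial_mul_brackets hxy (by exact_mod_cast congrArg (Rat.cast : ℚ → ℂ) hdy)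
    hNb hxc hyd, hdy, mphase_add_intCast]
  ring

lemma floor_add_age_pos {q ε2 ε3 : ℚ} {A : ℤ} (hq : 0 < q) (hε2 : 0 ≤ ε2) (hε3 : 0 ≤ ε3)
    (hA : (A : ℚ) = Int.fract q + ε2 + ε3) : 0 < ⌊q⌋ + A := by
  have hsum : ((⌊q⌋ + A : ℤ) : ℚ) = q + ε2 + ε3 := by
    push_cast
    linear_combination hA + Int.floor_add_fract q
  have hpos : (0 : ℚ) < (⌊q⌋ + A : ℤ) := by rw [hsum]; positivity
  exact_mod_cast hpos

theorem statement10_general (f q : ℚ) (hq : 0 < q) (ε1 : ℚ) (hε1 : ε1 = Int.fract q)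
    (ε2 ε3 : ℚ) (A : ℤ) (hA : (A : ℚ) = ε1 + ε2 + ε3) (hqA : 0 < ⌊q⌋ + A)
    (l3 L3 : ℚ) (hL3 : L3 = -(f + 1) * q + l3) (L1 L2 z : ℂ) (hz : z ≠ 0)
    (hB1 : BracketDefined ((q - ε1 : ℚ) : ℂ) L1)
    (hB2 : BracketDefined ((f * q - ε2 : ℚ) : ℂ) L2)
    (hB3 : BracketDefined ((-(f + 1) * q - ε3 : ℚ) : ℂ) (L3 : ℂ)) :
    (-mphase (q * (-f - 1) - ε3 - Int.fract (ε2 - f * ε1)) * (q : ℂ)⁻¹ * z ^ A *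
          (∏ a ∈ Finset.Icc (1 : ℤ) (⌊q⌋ + A - 1), ((f * q - ε2 + (a : ℚ) : ℚ) : ℂ)) /
          (⌊q⌋.toNat.factorial : ℂ)) *
        (z ^ (-A) * bracket ((q - ε1 : ℚ) : ℂ) L1 * bracket ((f * q - ε2 : ℚ) : ℂ) L2 *
          bracket ((-(f + 1) * q - ε3 : ℚ) : ℂ) (L3 : ℂ)) =
      -mphase (q * (-f - 1) - Int.fract (ε2 - f * ε1) + l3) * (q : ℂ)⁻¹ *
        bracket ((-L3 - 1 : ℚ) : ℂ) L2 * bracket 0 L1 := by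
  obtain ⟨N, hN⟩ := Int.eq_ofNat_of_zero_le (Int.floor_nonneg.mpr hq.le)
  obtain ⟨M, hM⟩ := Int.eq_ofNat_of_zero_le (show 0 ≤ ⌊q⌋ + A - 1 by omega)
  have hqN : q - ε1 = N := by rw [hε1, Int.self_sub_fract, hN, Int.cast_natCast]
  have hMq : (M : ℚ) = N + A - 1 := by rw [hN] at hM; exact_mod_cast hM.symm
  set x : ℚ := f * q - ε2 with hx
  set y : ℚ := -(f + 1) * q - ε3 with hy
  have hxy : -(y : ℂ) - 1 = x + M := by
    have hxy_rat : -y - 1 = x + M := by rw [hx, hy]; linear_combination -hMq - hA + hqN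
    exact_mod_cast congrArg (Rat.cast : ℚ → ℂ) hxy_rat
  have hprod : ∏ a ∈ Finset.Icc (1 : ℤ) M, ((x + (a : ℚ) : ℚ) : ℂ) = bracket (x + M) x := by
    simpa using prod_Icc_add_intCast x M
  set t : ℚ := q * (-f - 1) - ε3 - Int.fract (ε2 - f * ε1) with ht
  have hphase : q * (-f - 1) - Int.fract (ε2 - f * ε1) + l3 = t + (L3 - y) := by
    rw [hL3, hy, ht]; ring
  rw [hqN, Rat.cast_natCast] at hB1 ⊢
  rw [hM, hprod, hN, Int.toNat_natCast, hphase]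
  calc
    _ = -(q : ℂ)⁻¹ * (mphase t * (bracket (x + M) x / N.factorial *
          (bracket N L1 * bracket x L2 * bracket y L3))) := by
      rw [zpow_neg]; field_simp
    _ = _ := by
      rw [mphase_mul_bracket_div_factorial_mul_brackets hxy hB1 hB2 hB3]; push_cast; ring

/-- the term-by-term Gamma-ratio identity `D′ · I = A` underlying the
expression of the pulled-back disk amplitude as an explicit hypergeometric series, where
`D′` is the framed disk factor, `I` the localized `I`-function factor, and the right-hand
side the coefficient of the disk potential. -/
theorem statement10 (s1 d0 : ℕ) (hs1 : 0 < s1) (hd0 : 0 < d0) (f : ℤ)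
    (q : ℚ) (hq : q = (d0 : ℚ) / (s1 : ℚ))
    (ε1 : ℚ) (hε1 : ε1 = Int.fract q)
    (ε2 ε3 : ℚ) (hε2 : 0 ≤ ε2 ∧ ε2 < 1) (hε3 : 0 ≤ ε3 ∧ ε3 < 1)
    (A : ℤ) (hA : (A : ℚ) = ε1 + ε2 + ε3)
    (l1 l2 l3 : ℚ)
    (hl1 : ∃ m : ℤ, l1 + ε1 = (m : ℚ))
    (hl2 : ∃ m : ℤ, l2 + ε2 = (m : ℚ))
    (hl3 : ∃ m : ℤ, l3 + ε3 = (m : ℚ))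
    (L1 : ℕ) (hL1 : (L1 : ℚ) = q + l1)
    (L2 L3 : ℚ) (hL2 : L2 = (f : ℚ) * q + l2) (hL3 : L3 = -((f : ℚ) + 1) * q + l3)
    (z : ℂ) (hz : z ≠ 0)
    (hB1 : BracketDefined ((q - ε1 : ℚ) : ℂ) ((L1 : ℕ) : ℂ))
    (hB2 : BracketDefined (((f : ℚ) * q - ε2 : ℚ) : ℂ) ((L2 : ℚ) : ℂ))
    (hB3 : BracketDefined ((-((f : ℚ) + 1) * q - ε3 : ℚ) : ℂ) ((L3 : ℚ) : ℂ))
    (hB4 : BracketDefined ((-L3 - 1 : ℚ) : ℂ) ((L2 : ℚ) : ℂ))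
    (hB5 : BracketDefined (0 : ℂ) ((L1 : ℕ) : ℂ)) :
    (-mphase (q * (-(f : ℚ) - 1) - ε3 - Int.fract (ε2 - (f : ℚ) * ε1)) *
          ((s1 : ℂ) / (d0 : ℂ)) * z ^ A *
          (∏ a ∈ Finset.Icc (1 : ℤ) (⌊q⌋ + A - 1),
            (((f : ℚ) * q - ε2 + (a : ℚ) : ℚ) : ℂ)) /
          ((⌊q⌋.toNat.factorial : ℂ))) *
        (z ^ (-A) * bracket ((q - ε1 : ℚ) : ℂ) ((L1 : ℕ) : ℂ) *
          bracket (((f : ℚ) * q - ε2 : ℚ) : ℂ) ((L2 : ℚ) : ℂ) *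
          bracket ((-((f : ℚ) + 1) * q - ε3 : ℚ) : ℂ) ((L3 : ℚ) : ℂ)) =
      -mphase (q * (-(f : ℚ) - 1) - Int.fract (ε2 - (f : ℚ) * ε1) + l3) *
        ((s1 : ℂ) / (d0 : ℂ)) * bracket ((-L3 - 1 : ℚ) : ℂ) ((L2 : ℚ) : ℂ) *
        bracket (0 : ℂ) ((L1 : ℕ) : ℂ) := by
  have hq0 : 0 < q := by rw [hq]; positivity
  have hinv : (s1 : ℂ) / d0 = (q : ℂ)⁻¹ := by rw [hq]; push_cast; rw [inv_div]
  rw [hinv]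
  exact statement10_general f q hq0 ε1 hε1 ε2 ε3 A hA
    (floor_add_age_pos hq0 hε2.1 hε3.1 (hε1 ▸ hA)) l3 L3 hL3 L1 L2 z hz hB1 hB2 hB3
end

section
/- Let N be a finitely generated abelian group with torsion-free quotient N̄ := N/N_tor of rank n, let b_1, …, b_r ∈ N generate N, let φ : ℤ^r → N be the induced surjection and L := ker φ. Let I' ⊂ {1, …, r} with |I'| = n be such that the images b̄_i for i ∈ I' form an ℝ-basis of N̄ ⊗ ℝ, and set I := {1, …, r} ∖ I'. For each i let D_i ∈ Hom(L, ℤ) be the restriction to L of the i-th coordinate function on ℤ^r, extended to L ⊗ ℚ. Let K := { β ∈ L ⊗ ℚ : ⟨D_i, β⟩ ∈ ℤ for all i ∈ I } and Box := { v ∈ N : v̄ = Σ_{i ∈ I'} c_i b̄_i in N̄ ⊗ ℚ with 0 ≤ c_i < 1 }. Then the map v : K → N defined by v(β) := Σ_{i=1}^r ⌈⟨D_i, β⟩⌉ · b_i takes values in Box, satisfies the relation (image of v(β) in N̄ ⊗ ℚ) = Σ_{i ∈ I'} {−⟨D_i, β⟩} · b̄_i, and induces a bijection K/L → Box. -/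
open scoped TensorProduct BigOperators

/-- The surjection `ℤ^r → N`, `x ↦ ∑ᵢ xᵢ • bᵢ`, induced by a generating family
`b₁, …, b_r` of an abelian group `N`. -/
def phiHom {N : Type*} [AddCommGroup N] {r : ℕ} (b : Fin r → N) : (Fin r → ℤ) →+ N :=
  AddMonoidHom.mk' (fun x => ∑ i, x i • b i)
    (fun x y => by simp [Pi.add_apply, add_smul, Finset.sum_add_distrib])

/-!
Write `v̄ = 1 ⊗ v`. Right exactness of `⊗` identifies the `k`-span of `L` with the vectors `β` such
that `∑ᵢ βᵢ b̄ᵢ = 0`. Subtracting this relation from `v(β)‾ = ∑ᵢ ⌈βᵢ⌉ b̄ᵢ` turns the coefficients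
into `⌈βᵢ⌉ - βᵢ = {-βᵢ}`, which vanish off `I'` when `β ∈ K`; hence `v(β) ∈ Box`. Conversely, if
`v = ∑ᵢ xᵢ bᵢ` lies in the box with coefficients `cᵢ`, then `β = x - c` is a preimage. Finally, by
linear independence `v(β)` determines all the `{-βᵢ}`, that is, `β` modulo integral vectors.
-/

section RelationSpan

variable {ι R A M : Type*} [Fintype ι] [CommRing R] [CommRing A] [Algebra R A]
  [AddCommGroup M] [Module R M]

variable (R A) in
/-- The `A`-span in `A^ι` of the `R`-linear relations between the `bᵢ`. For `R = ℤ` and `A` flat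
this is `L ⊗ A`, where `L` is the lattice of integral relations. -/
def relationSpan (b : ι → M) : Submodule A (ι → A) :=
  Submodule.span A ((fun (x : ι → R) i => algebraMap R A (x i)) '' {x | ∑ i, x i • b i = 0})

theorem one_tmul_sum_smul (b : ι → M) (x : ι → R) :
    (1 : A) ⊗ₜ[R] (∑ i, x i • b i) = ∑ i, algebraMap R A (x i) • ((1 : A) ⊗ₜ[R] b i) := by
  simp only [TensorProduct.tmul_sum, TensorProduct.tmul_smul, algebraMap_smul]

theorem relationSpan_le_ker (b : ι → M) :
    relationSpan R A b ≤
      LinearMap.ker (Fintype.linearCombination A fun i => (1 : A) ⊗ₜ[R] b i) := by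
  refine Submodule.span_le.2 ?_
  rintro _ ⟨x, hx : ∑ i, x i • b i = 0, rfl⟩
  rw [SetLike.mem_coe, LinearMap.mem_ker, Fintype.linearCombination_apply, ← one_tmul_sum_smul, hx,
    TensorProduct.tmul_zero]

theorem relationSpan_eq_ker {b : ι → M} (hb : Submodule.span R (Set.range b) = ⊤) :
    relationSpan R A b =
      LinearMap.ker (Fintype.linearCombination A fun i => (1 : A) ⊗ₜ[R] b i) := by
  refine le_antisymm (relationSpan_le_ker b) fun β hβ => ?_
  have sum_tmul_eq_zero : ∑ i, b i ⊗ₜ[R] β i = 0 := by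
    apply (TensorProduct.comm R M A).injective
    simpa [Fintype.linearCombination_apply, TensorProduct.smul_tmul'] using hβ
  obtain ⟨n, a, y, hβy, ha⟩ :=
    TensorProduct.vanishesTrivially_of_sum_tmul_eq_zero R hb sum_tmul_eq_zero
  have β_eq : β = ∑ j, y j • fun i => algebraMap R A (a i j) := by
    ext i
    simp only [hβy, Finset.sum_apply, Pi.smul_apply, smul_eq_mul,
      Algebra.smul_def (a i _), mul_comm]
  rw [β_eq]
  exact Submodule.sum_mem _ fun j _ =>
    Submodule.smul_mem _ _ (Submodule.subset_span ⟨fun i => a i j, ha j, rfl⟩)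

end RelationSpan

section FloorRing

variable {k : Type*} [CommRing k] [LinearOrder k] [IsStrictOrderedRing k] [FloorRing k]

theorem fract_neg_eq_ceil_sub (x : k) : Int.fract (-x) = ⌈x⌉ - x := by
  rw [Int.fract, Int.floor_neg, Int.cast_neg]
  ring

theorem fract_neg_eq_zero_of_eq_intCast {x : k} (hx : ∃ m : ℤ, x = m) : Int.fract (-x) = 0 := by
  obtain ⟨m, rfl⟩ := hx
  rw [Int.fract_neg_eq_zero, Int.fract_intCast]

variable {ι N : Type*} [Fintype ι] [AddCommGroup N]

variable (k) in
/-- The set `K` of all `β ∈ L ⊗ k` whose coordinates outside `I'` are integers. -/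
def fractionalRelations (b : ι → N) (I' : Finset ι) : Set (ι → k) :=
  {β | β ∈ relationSpan ℤ k b ∧ ∀ i ∉ I', ∃ m : ℤ, β i = m}

variable (k) in
/-- The set `Box` of all `v ∈ N` whose image in `k ⊗ N` lies in the half-open parallelepiped
spanned by the images of the `bᵢ`, `i ∈ I'`. The values of `c` outside `I'` are irrelevant. -/
def box (b : ι → N) (I' : Finset ι) : Set N :=
  {v | ∃ c : ι → k, (∀ i ∈ I', 0 ≤ c i ∧ c i < 1) ∧
    (1 : k) ⊗ₜ[ℤ] v = ∑ i ∈ I', c i • ((1 : k) ⊗ₜ[ℤ] b i)}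

/-- The map `β ↦ v(β)`, rounding up the coordinates of `β` and applying `ℤ^ι → N`. -/
def ceilCombination (b : ι → N) (β : ι → k) : N :=
  ∑ i, ⌈β i⌉ • b i

variable {b : ι → N} {I' : Finset ι} {β β' : ι → k}

theorem one_tmul_ceilCombination (hβ : β ∈ fractionalRelations k b I') :
    (1 : k) ⊗ₜ[ℤ] ceilCombination b β =
      ∑ i ∈ I', Int.fract (-β i) • ((1 : k) ⊗ₜ[ℤ] b i) := by
  have relation : ∑ i, β i • ((1 : k) ⊗ₜ[ℤ] b i) = 0 := relationSpan_le_ker b hβ.1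
  calc (1 : k) ⊗ₜ[ℤ] ceilCombination b β
      = ∑ i, (⌈β i⌉ : k) • ((1 : k) ⊗ₜ[ℤ] b i) := one_tmul_sum_smul b _
    _ = ∑ i, Int.fract (-β i) • ((1 : k) ⊗ₜ[ℤ] b i) := by
      simp only [fract_neg_eq_ceil_sub, sub_smul, Finset.sum_sub_distrib, relation, sub_zero]
    _ = ∑ i ∈ I', Int.fract (-β i) • ((1 : k) ⊗ₜ[ℤ] b i) :=
      (Finset.sum_subset I'.subset_univ fun i _ hi => by
        rw [fract_neg_eq_zero_of_eq_intCast (hβ.2 i hi), zero_smul]).symm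

theorem ceilCombination_mem_box (hβ : β ∈ fractionalRelations k b I') :
    ceilCombination b β ∈ box k b I' :=
  ⟨fun i => Int.fract (-β i), fun _ _ => ⟨Int.fract_nonneg _, Int.fract_lt_one _⟩,
    one_tmul_ceilCombination hβ⟩

theorem exists_ceilCombination_eq (hb : AddSubgroup.closure (Set.range b) = ⊤) {v : N}
    (hv : v ∈ box k b I') : ∃ β ∈ fractionalRelations k b I', ceilCombination b β = v := by
  classical
  have span_eq_top : Submodule.span ℤ (Set.range b) = ⊤ := by
    rw [← AddSubgroup.toIntSubmodule_closure, hb, map_top]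
  obtain ⟨c, hc, hvc⟩ := hv
  obtain ⟨x, rfl⟩ : ∃ x : ι → ℤ, ∑ i, x i • b i = v :=
    (Submodule.mem_span_range_iff_exists_fun ℤ).1 (span_eq_top ▸ Submodule.mem_top)
  refine ⟨fun i => x i - if i ∈ I' then c i else 0, ⟨?_, fun i hi => ⟨x i, by simp [hi]⟩⟩, ?_⟩
  · rw [one_tmul_sum_smul] at hvc
    rw [relationSpan_eq_ker span_eq_top, LinearMap.mem_ker, Fintype.linearCombination_apply]
    simpa [sub_smul, sub_eq_zero, ite_smul] using hvc
  · refine Finset.sum_congr rfl fun i _ => congrArg (· • b i) ?_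
    rw [Int.ceil_eq_iff]
    dsimp only
    split_ifs with hi
    · exact ⟨by linarith [(hc i hi).2], by linarith [(hc i hi).1]⟩
    · simp

theorem fract_neg_eq_of_ceilCombination_eq
    (hind : LinearIndepOn k (fun i => (1 : k) ⊗ₜ[ℤ] b i) (I' : Set ι))
    (hβ : β ∈ fractionalRelations k b I') (hβ' : β' ∈ fractionalRelations k b I')
    (h : ceilCombination b β = ceilCombination b β') (i : ι) :
    Int.fract (-β i) = Int.fract (-β' i) := by
  by_cases hi : i ∈ I'
  · refine linearIndepOn_finset_iffₛ.1 hind (fun j => Int.fract (-β j)) (fun j => Int.fract (-β' j))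
      ?_ i hi
    rw [← one_tmul_ceilCombination hβ, h, one_tmul_ceilCombination hβ']
  · rw [fract_neg_eq_zero_of_eq_intCast (hβ.2 i hi), fract_neg_eq_zero_of_eq_intCast (hβ'.2 i hi)]

theorem ceilCombination_add_intCast (b : ι → N) (β : ι → k) (x : ι → ℤ) :
    ceilCombination b (β + fun i => (x i : k)) = ceilCombination b β + ∑ i, x i • b i := by
  simp only [ceilCombination, Pi.add_apply, Int.ceil_add_intCast, add_smul, Finset.sum_add_distrib]

theorem ceilCombination_eq_iff
    (hind : LinearIndepOn k (fun i => (1 : k) ⊗ₜ[ℤ] b i) (I' : Set ι))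
    (hβ : β ∈ fractionalRelations k b I') (hβ' : β' ∈ fractionalRelations k b I') :
    ceilCombination b β = ceilCombination b β' ↔
      ∃ x : ι → ℤ, ∑ i, x i • b i = 0 ∧ β' - β = fun i => (x i : k) := by
  constructor
  · intro h
    refine ⟨fun i => ⌈β' i⌉ - ⌈β i⌉, ?_, funext fun i => ?_⟩
    · simpa only [sub_smul, Finset.sum_sub_distrib] using! sub_eq_zero.2 h.symm
    · have fract_eq := fract_neg_eq_of_ceilCombination_eq hind hβ hβ' h i
      rw [fract_neg_eq_ceil_sub, fract_neg_eq_ceil_sub] at fract_eq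
      rw [Pi.sub_apply, Int.cast_sub]
      linear_combination fract_eq
  · rintro ⟨x, hx, hβx⟩
    rw [eq_add_of_sub_eq' hβx, ceilCombination_add_intCast, hx, add_zero]

theorem statement11_general (hb : AddSubgroup.closure (Set.range b) = ⊤)
    (hind : LinearIndepOn k (fun i => (1 : k) ⊗ₜ[ℤ] b i) (I' : Set ι)) :
    (∀ β ∈ fractionalRelations k b I', ceilCombination b β ∈ box k b I') ∧
    (∀ β ∈ fractionalRelations k b I', (1 : k) ⊗ₜ[ℤ] ceilCombination b β =
      ∑ i ∈ I', Int.fract (-β i) • ((1 : k) ⊗ₜ[ℤ] b i)) ∧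
    (∀ v ∈ box k b I', ∃ β ∈ fractionalRelations k b I', ceilCombination b β = v) ∧
    (∀ β ∈ fractionalRelations k b I', ∀ β' ∈ fractionalRelations k b I',
      (ceilCombination b β = ceilCombination b β' ↔
        ∃ x : ι → ℤ, ∑ i, x i • b i = 0 ∧ β' - β = fun i => (x i : k))) :=
  ⟨fun _ => ceilCombination_mem_box, fun _ => one_tmul_ceilCombination,
    fun _ => exists_ceilCombination_eq hb, fun _ hβ _ => ceilCombination_eq_iff hind hβ⟩

end FloorRing

/-- with `L = ker(φ : ℤ^r → N)`, `I'` a subset of indices whose images form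
a basis of `N ⊗ ℚ` (equivalently of `N̄ ⊗ ℝ`), `Dᵢ` the coordinate functionals,
`K = {β ∈ L ⊗ ℚ : ⟨Dᵢ, β⟩ ∈ ℤ ∀ i ∉ I'}` and
`Box = {v ∈ N : v̄ = ∑_{i ∈ I'} cᵢ b̄ᵢ, 0 ≤ cᵢ < 1}`, the map
`v(β) = ∑ᵢ ⌈⟨Dᵢ, β⟩⌉ bᵢ` takes values in `Box`, satisfies
`v(β)‾ = ∑_{i ∈ I'} {−⟨Dᵢ, β⟩} b̄ᵢ`, and induces a bijection `K/L → Box`.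
Here `N ⊗ ℚ` is realized as `ℚ ⊗[ℤ] N` (with `v̄ = 1 ⊗ v`) and `L ⊗ ℚ` as the ℚ-span of
`L` inside `ℚ^r`. -/
theorem statement11 (N : Type*) [AddCommGroup N] (n r : ℕ)
    (b : Fin r → N) (hgen : AddSubgroup.closure (Set.range b) = ⊤)
    (I' : Finset (Fin r)) (hcard : I'.card = n)
    (hind : LinearIndependent ℚ (fun i : I' => ((1 : ℚ) ⊗ₜ[ℤ] b i : ℚ ⊗[ℤ] N)))
    (hspan : Submodule.span ℚ
      (Set.range fun i : I' => ((1 : ℚ) ⊗ₜ[ℤ] b i : ℚ ⊗[ℤ] N)) = ⊤)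
    (K : Set (Fin r → ℚ))
    (hK : K = {β | β ∈ Submodule.span ℚ ((fun x : Fin r → ℤ => fun i => (x i : ℚ)) ''
        {x | phiHom b x = 0}) ∧ ∀ i ∉ I', ∃ m : ℤ, β i = (m : ℚ)})
    (Box : Set N)
    (hBox : Box = {v | ∃ c : Fin r → ℚ, (∀ i ∈ I', 0 ≤ c i ∧ c i < 1) ∧
        ((1 : ℚ) ⊗ₜ[ℤ] v : ℚ ⊗[ℤ] N) = ∑ i ∈ I', c i • ((1 : ℚ) ⊗ₜ[ℤ] b i)})
    (vmap : (Fin r → ℚ) → N) (hvmap : ∀ β, vmap β = ∑ i, ⌈β i⌉ • b i) :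
    (∀ β ∈ K, vmap β ∈ Box) ∧
    (∀ β ∈ K, ((1 : ℚ) ⊗ₜ[ℤ] vmap β : ℚ ⊗[ℤ] N) =
        ∑ i ∈ I', Int.fract (-(β i)) • ((1 : ℚ) ⊗ₜ[ℤ] b i : ℚ ⊗[ℤ] N)) ∧
    (∀ v ∈ Box, ∃ β ∈ K, vmap β = v) ∧
    (∀ β ∈ K, ∀ β' ∈ K, (vmap β = vmap β' ↔
        ∃ x : Fin r → ℤ, phiHom b x = 0 ∧ β' - β = fun i => (x i : ℚ))) := by
  obtain rfl : vmap = ceilCombination b := funext hvmap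
  subst hK hBox
  exact statement11_general hgen hind
end

section
/- Let N be a finitely generated abelian group with N̄ := N/N_tor of rank n, let b_1, …, b_r ∈ N generate N, let φ : ℤ^r → N be the induced surjection and L := ker φ (so L has rank k = r − n). Let I' ⊂ {1, …, r} with |I'| = n be such that the images b̄_i for i ∈ I' form an ℝ-basis of N̄ ⊗ ℝ, and set I := {1, …, r} ∖ I'. For each i ∈ I let D_i ∈ Hom(L, ℤ) be the restriction to L of the i-th coordinate function on ℤ^r. Then the subgroup K^∨ := Σ_{i ∈ I} ℤ·D_i is a finite-index subgroup of Hom(L, ℤ). -/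
open scoped TensorProduct BigOperators

/-- `Dᵢ ∈ Hom(L, ℤ)`: the restriction to `L = ker(φ : ℤ^r → N)` of the `i`-th coordinate
function on `ℤ^r`. -/
def coordHom {N : Type*} [AddCommGroup N] {r : ℕ} (b : Fin r → N) (i : Fin r) :
    ↥(phiHom b).ker →+ ℤ :=
  AddMonoidHom.mk' (fun x => (x : Fin r → ℤ) i) (fun _ _ => rfl)

/-!
A subgroup `K` of `Hom(L, ℤ)` with no common zero except `0` makes evaluation `L → Hom(K, ℤ)`
injective, so `rank K ≥ rank L = rank Hom(L, ℤ)` and `K` has finite index. For `L = ker φ`, an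
element of `L` killed by all `Dᵢ` with `i ∉ I'` is a linear relation among the `bᵢ` with
`i ∈ I'`, hence zero.
-/

lemma finrank_le_finrank_of_separatingRight {R M N : Type*} [CommRing R] [Nontrivial R]
    [AddCommGroup M] [Module R M] [Module.Free R M] [Module.Finite R M]
    [AddCommGroup N] [Module R N] {B : M →ₗ[R] N →ₗ[R] R} (hB : B.SeparatingRight) :
    Module.finrank R N ≤ Module.finrank R M := by
  have flip_injective : Function.Injective B.flip :=
    LinearMap.ker_eq_bot.mp (LinearMap.separatingRight_iff_flip_ker_eq_bot.mp hB)
  calc Module.finrank R N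
      ≤ Module.finrank R (Module.Dual R M) :=
        LinearMap.finrank_le_finrank_of_injective flip_injective
    _ = Module.finrank R M := Module.finrank_linearMap_self R R M

section SeparatingSubgroup

variable {L : Type*} [AddCommGroup L] {K : AddSubgroup (L →+ ℤ)}

lemma isTorsionFree_of_separating (hK : ∀ x, (∀ f ∈ K, f x = 0) → x = 0) :
    Module.IsTorsionFree ℤ L := by
  let eval : L →+ K → ℤ := AddMonoidHom.mk' (fun x f ↦ f.1 x) fun x y ↦ by ext; simp
  have eval_injective : Function.Injective eval :=
    (injective_iff_map_eq_zero eval).mpr fun x hx ↦ hK x fun f hf ↦ congrFun hx ⟨f, hf⟩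
  exact eval_injective.moduleIsTorsionFree eval fun m x ↦ map_zsmul eval m x

lemma finiteIndex_of_separating [Module.Finite ℤ L]
    (hK : ∀ x, (∀ f ∈ K, f x = 0) → x = 0) : K.FiniteIndex := by
  have := isTorsionFree_of_separating hK
  let S : Submodule ℤ (L →+ ℤ) := K.toIntSubmodule
  let B : S →ₗ[ℤ] L →ₗ[ℤ] ℤ := (addMonoidHomLequivInt ℤ).toLinearMap ∘ₗ S.subtype
  have hB : B.SeparatingRight := fun x hx ↦ hK x fun f hf ↦ hx ⟨f, hf⟩
  have finrank_hom : Module.finrank ℤ (L →+ ℤ) = Module.finrank ℤ L :=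
    (addMonoidHomLequivInt ℤ).finrank_eq.trans (Module.finrank_linearMap_self ℤ ℤ L)
  have finrank_S : Module.finrank ℤ S = Module.finrank ℤ (L →+ ℤ) :=
    (Submodule.finrank_le S).antisymm
      (finrank_hom.trans_le (finrank_le_finrank_of_separatingRight hB))
  have : Finite ((L →+ ℤ) ⧸ K) := Submodule.finiteQuotient_iff S |>.mpr finrank_S
  exact K.finiteIndex_of_finite_quotient

end SeparatingSubgroup

lemma eq_zero_of_sum_smul_eq_zero_of_linearIndepOn {R M ι : Type*} [Ring R] [AddCommGroup M]
    [Module R M] [Fintype ι] {v : ι → M} {s : Finset ι} (hv : LinearIndepOn R v s) {x : ι → R}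
    (hsum : ∑ i, x i • v i = 0) (hx : ∀ i ∉ s, x i = 0) : x = 0 := by
  have sum_s : ∑ i ∈ s, x i • v i = 0 := by
    rwa [Finset.sum_subset s.subset_univ fun i _ hi ↦ by rw [hx i hi, zero_smul]]
  funext i
  by_cases hi : i ∈ s
  · exact linearIndepOn_finset_iff.mp hv x sum_s i hi
  · exact hx i hi

lemma linearIndependent_of_one_tmul {R A M ι : Type*} [CommSemiring R] [Semiring A] [Algebra R A]
    [FaithfulSMul R A] [AddCommMonoid M] [Module R M] {v : ι → M}
    (hv : LinearIndependent A fun i ↦ (1 : A) ⊗ₜ[R] v i) : LinearIndependent R v :=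
  (hv.restrict_scalars' R).of_comp (TensorProduct.mk R A M 1)

theorem statement14_general {N : Type*} [AddCommGroup N] {r : ℕ} (b : Fin r → N)
    {I' : Finset (Fin r)} (hind : LinearIndepOn ℤ b I') :
    (AddSubgroup.closure
        {g : ↥(phiHom b).ker →+ ℤ | ∃ i ∉ I', g = coordHom b i}).FiniteIndex := by
  have : Module.Finite ℤ (phiHom b).ker :=
    inferInstanceAs (Module.Finite ℤ (phiHom b).ker.toIntSubmodule)
  refine finiteIndex_of_separating fun x hx ↦ Subtype.ext ?_
  have coord_eq_zero : ∀ i ∉ I', x.1 i = 0 := fun i hi ↦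
    hx (coordHom b i) (AddSubgroup.subset_closure ⟨i, hi, rfl⟩)
  exact eq_zero_of_sum_smul_eq_zero_of_linearIndepOn hind x.2 coord_eq_zero

/-- with `L = ker(φ : ℤ^r → N)` and `I'` a set of indices whose images
`b̄ᵢ` form a basis of `N ⊗ ℚ` (equivalently an ℝ-basis of `N̄ ⊗ ℝ`), the subgroup
`K^∨ = ∑_{i ∉ I'} ℤ·Dᵢ` of `Hom(L, ℤ)` has finite index. -/
theorem statement14 (N : Type*) [AddCommGroup N] (n r : ℕ)
    (b : Fin r → N) (hgen : AddSubgroup.closure (Set.range b) = ⊤)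
    (I' : Finset (Fin r)) (hcard : I'.card = n)
    (hind : LinearIndependent ℚ (fun i : I' => ((1 : ℚ) ⊗ₜ[ℤ] b i : ℚ ⊗[ℤ] N)))
    (hspan : Submodule.span ℚ
      (Set.range fun i : I' => ((1 : ℚ) ⊗ₜ[ℤ] b i : ℚ ⊗[ℤ] N)) = ⊤) :
    (AddSubgroup.closure
        {g : ↥(phiHom b).ker →+ ℤ | ∃ i ∉ I', g = coordHom b i}).FiniteIndex :=
  statement14_general b (linearIndependent_of_one_tmul hind)
end

section
/- Let 0 → L → ℤ^r →^{φ} N → 0 be a short exact sequence of abelian groups with φ surjective and L = ker φ. Then the restriction homomorphism Hom(ℤ^r, ℤ) → Hom(L, ℤ) is surjective if and only if N is torsion-free. -/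
/-!
Torsion-freeness of `N` and extendability of functionals meet in divisibility. If `r • φ v = 0`,
then `r • v` comes from some `x` in `L`; when every functional on `L` extends to the middle module,
each takes a value divisible by `r` at `x`, so `x` is itself a multiple of `r` because `L` is
projective, and cancelling `r` puts `v` in `L`. Conversely, a finitely generated torsion-free module
over a Dedekind domain is projective, so the sequence splits and functionals on `L` extend along
the retraction.
-/

open Function

section CommRing

variable {R L M N : Type*} [CommRing R] [AddCommGroup L] [AddCommGroup M] [AddCommGroup N]
  [Module R L] [Module R M] [Module R N]

theorem exists_eq_smul_of_forall_dual_dvd [Module.Projective R L] {r : R} {x : L}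
    (hdvd : ∀ f : Module.Dual R L, r ∣ f x) : ∃ y : L, x = r • y := by
  obtain ⟨s, hs⟩ := Module.projective_def.1 ‹Module.Projective R L›
  choose c hc using fun a : L ↦ hdvd (Finsupp.lapply a ∘ₗ s)
  refine ⟨∑ a ∈ (s x).support, c a • a, ?_⟩
  calc
    x = ∑ a ∈ (s x).support, s x a • a := (hs x).symm
    _ = ∑ a ∈ (s x).support, r • c a • a :=
      Finset.sum_congr rfl fun a _ ↦ by rw [← mul_smul, ← hc a]; rfl
    _ = r • ∑ a ∈ (s x).support, c a • a := Finset.smul_sum.symm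

variable {ι : L →ₗ[R] M} {φ : M →ₗ[R] N}

theorem isTorsionFree_of_exact_of_surjective_dualMap [Module.Projective R L]
    [Module.IsTorsionFree R M] (hexact : Exact ι φ) (hφ : Surjective φ)
    (hdual : Surjective ι.dualMap) : Module.IsTorsionFree R N := by
  refine ⟨fun r hr ↦ isSMulRegular_iff_right_eq_zero_of_smul.2 fun n hn ↦ ?_⟩
  obtain ⟨v, rfl⟩ := hφ n
  obtain ⟨x, hx⟩ : ∃ x, ι x = r • v := (hexact _).1 (by rw [map_smul, hn])
  have hdvd (f : Module.Dual R L) : r ∣ f x := by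
    obtain ⟨g, rfl⟩ := hdual f
    exact ⟨g v, by rw [LinearMap.dualMap_apply, hx, map_smul, smul_eq_mul]⟩
  obtain ⟨y, rfl⟩ := exists_eq_smul_of_forall_dual_dvd hdvd
  have hy : ι y = v := hr.isSMulRegular (by simpa only [map_smul] using hx)
  rw [← hy, hexact.apply_apply_eq_zero]

theorem surjective_dualMap_of_exact_of_projective [Module.Projective R N] (hι : Injective ι)
    (hexact : Exact ι φ) (hφ : Surjective φ) : Surjective ι.dualMap := by
  have hsection : ∃ s, φ ∘ₗ s = LinearMap.id :=
    Module.projective_lifting_property φ LinearMap.id hφ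
  obtain ⟨ρ, hρ⟩ : ∃ ρ, ρ ∘ₗ ι = LinearMap.id := ((hexact.split_tfae hι hφ).out 0 1).1 hsection
  exact fun f ↦ ⟨f ∘ₗ ρ, by rw [LinearMap.dualMap_apply', LinearMap.comp_assoc, hρ, f.comp_id]⟩

end CommRing

section DedekindDomain

variable {R L M N : Type*} [CommRing R] [IsDedekindDomain R] [AddCommGroup L] [AddCommGroup M]
  [AddCommGroup N] [Module R L] [Module R M] [Module R N]

theorem projective_of_finite_of_isTorsionFree [Module.Finite R N] [Module.IsTorsionFree R N] :
    Module.Projective R N := by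
  have : Module.Flat R N := inferInstance
  have : Module.FinitePresentation R N := Module.finitePresentation_of_finite R N
  exact Module.Flat.projective_of_finitePresentation

theorem statement15_general [Module.Projective R L] [Module.IsTorsionFree R M] [Module.Finite R N]
    {ι : L →ₗ[R] M} {φ : M →ₗ[R] N} (hι : Injective ι) (hexact : Exact ι φ) (hφ : Surjective φ) :
    Surjective ι.dualMap ↔ Module.IsTorsionFree R N := by
  refine ⟨isTorsionFree_of_exact_of_surjective_dualMap hexact hφ, fun _ ↦ ?_⟩
  have : Module.Projective R N := projective_of_finite_of_isTorsionFree
  exact surjective_dualMap_of_exact_of_projective hι hexact hφ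

end DedekindDomain

section AddCommGroup

variable {A B : Type*} [AddCommGroup A] [AddCommGroup B]

theorem surjective_dualMap_toIntLinearMap_iff (i : A →+ B) :
    Surjective i.toIntLinearMap.dualMap ↔ Surjective fun g : B →+ ℤ ↦ g.comp i := by
  rw [← (addMonoidHomLequivInt ℤ).surjective_comp,
    ← (addMonoidHomLequivInt ℤ).comp_surjective (fun g : B →+ ℤ ↦ g.comp i)]
  rfl

theorem isTorsionFree_int_iff_forall_zsmul_eq_zero :
    Module.IsTorsionFree ℤ A ↔ ∀ (x : A) (n : ℤ), n ≠ 0 → n • x = 0 → x = 0 := by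
  rw [Module.isTorsionFree_iff_smul_eq_zero, forall_comm]
  grind

end AddCommGroup

/-- for a short exact sequence `0 → L → ℤ^r →^φ N → 0` (so `φ` is
surjective and `L = ker φ`), the restriction map `Hom(ℤ^r, ℤ) → Hom(L, ℤ)` is surjective
if and only if `N` is torsion-free. -/
theorem statement15 (N : Type*) [AddCommGroup N] (r : ℕ)
    (φ : (Fin r → ℤ) →+ N) (hφ : Function.Surjective φ) :
    Function.Surjective
        (fun g : (Fin r → ℤ) →+ ℤ => g.comp φ.ker.subtype) ↔
      ∀ (x : N) (n : ℤ), n ≠ 0 → n • x = 0 → x = 0 := by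
  have : Module.Finite ℤ N := .of_surjective φ.toIntLinearMap hφ
  have : Module.Free ℤ φ.ker :=
    inferInstanceAs (Module.Free ℤ (LinearMap.ker φ.toIntLinearMap))
  rw [← surjective_dualMap_toIntLinearMap_iff, ← isTorsionFree_int_iff_forall_zsmul_eq_zero]
  exact statement15_general (φ := φ.toIntLinearMap) φ.ker.subtype_injective
    (LinearMap.exact_subtype_ker_map φ.toIntLinearMap) hφ
end
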